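/- arXiv:2510.14002 — 6 statements merged into one kernel-verified Lean document; each statement's English description precedes it below -/
import Mathlib

section
/- For every M > 0 there exist a constant K > 0 and an integer k₀ such that for all integers k ≥ k₀ and all real x with |x| ≤ M, one has |H_k(x)| ≤ K · √(k!) / k^{1/4}. -/
/-!
The Hermite polynomials obey `H_{n+1}' = (n+1) H_n` and `H_n' = x H_n - H_{n+1}`, so the energy
`E(x) = H_{n+1}(x)² + (n+1) H_n(x)²` satisfies `E'(x) = 2 (n+1) x H_n(x)²`, whence `E(x) e^{-x²}`
is largest at the origin (`energy_bound`). At the origin, `H_{n+2}(0) = -(n+1) H_n(0)` gives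
`H_n(0)⁴ (n+1) ≤ n!²` by induction (`Hpoly_zero_bound`), using `(n+1)(n+3) ≤ (n+2)²`.
Together, `H_k(x)² ≤ E(x) ≤ 2 e^{M²} k! / √k` for `|x| ≤ M` and `k ≥ 1`.
-/

open Real

/-- The `k`-th probabilists' Hermite polynomial, evaluated at `x`. -/
noncomputable def Hpoly (k : ℕ) (x : ℝ) : ℝ := Polynomial.aeval x (Polynomial.hermite k)

lemma derivative_hermite_succ (n : ℕ) :
    Polynomial.derivative (Polynomial.hermite (n + 1)) =
      ((n : Polynomial ℤ) + 1) * Polynomial.hermite n := by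
  induction n with
  | zero => simp
  | succ n ih =>
    rw [Polynomial.hermite_succ (n + 1), Polynomial.derivative_sub, Polynomial.derivative_mul, ih,
      Polynomial.derivative_mul, Polynomial.hermite_succ n]
    simp
    ring

lemma hasDerivAt_Hpoly_succ (n : ℕ) (x : ℝ) :
    HasDerivAt (Hpoly (n + 1)) ((n + 1) * Hpoly n x) x := by
  have h := (Polynomial.hermite (n + 1)).hasDerivAt_aeval x
  have e : Polynomial.aeval x (Polynomial.derivative (Polynomial.hermite (n + 1))) =
      (n + 1) * Hpoly n x := by
    simp [Hpoly, derivative_hermite_succ, -Polynomial.hermite_succ]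
  rw [e] at h
  exact h

lemma hasDerivAt_Hpoly (n : ℕ) (x : ℝ) :
    HasDerivAt (Hpoly n) (x * Hpoly n x - Hpoly (n + 1) x) x := by
  have h := (Polynomial.hermite n).hasDerivAt_aeval x
  have e : Polynomial.aeval x (Polynomial.derivative (Polynomial.hermite n)) =
      x * Hpoly n x - Hpoly (n + 1) x := by
    simp [Hpoly, Polynomial.hermite_succ]
  rw [e] at h
  exact h

lemma Hpoly_zero_rec (n : ℕ) : Hpoly (n + 2) 0 = -((n + 1) * Hpoly n 0) := by
  have h := (hasDerivAt_Hpoly (n + 1) 0).unique (hasDerivAt_Hpoly_succ n 0)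
  linarith

lemma Hpoly_zero_bound (n : ℕ) :
    Hpoly n 0 ^ 4 * (n + 1) ≤ (n.factorial : ℝ) ^ 2 := by
  induction n using Nat.twoStepInduction with
  | zero => simp [Hpoly]
  | one => simp [Hpoly]
  | more n ih _ =>
    rw [Hpoly_zero_rec, Nat.factorial_succ, Nat.factorial_succ]
    push_cast
    calc (-((n + 1) * Hpoly n 0)) ^ 4 * ((n : ℝ) + 2 + 1)
        = (n + 1) ^ 3 * (n + 3) * (Hpoly n 0 ^ 4 * (n + 1)) := by ring
      _ ≤ (n + 1) ^ 3 * (n + 3) * (n.factorial : ℝ) ^ 2 := by gcongr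
      _ = (n + 1) ^ 2 * ((n + 1) * (n + 3)) * (n.factorial : ℝ) ^ 2 := by ring
      _ ≤ (n + 1) ^ 2 * (n + 2) ^ 2 * (n.factorial : ℝ) ^ 2 := by
          gcongr
          nlinarith
      _ = _ := by ring

lemma Hpoly_zero_sq_le (n : ℕ) : Hpoly n 0 ^ 2 ≤ n.factorial / √((n : ℝ) + 1) := by
  have hs : 0 < √((n : ℝ) + 1) := by positivity
  rw [le_div_iff₀ hs]
  refine (pow_le_pow_iff_left₀ (by positivity) (by positivity) two_ne_zero).1 ?_
  rw [mul_pow, Real.sq_sqrt (by positivity), ← pow_mul]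
  exact Hpoly_zero_bound n

/-- The energy `H_{n+1}² + (n+1) H_n²` grows at most by a factor `e^{x²}` from the origin. -/
lemma energy_bound (n : ℕ) (x : ℝ) :
    Hpoly (n + 1) x ^ 2 + (n + 1) * Hpoly n x ^ 2 ≤
      exp (x ^ 2) * (Hpoly (n + 1) 0 ^ 2 + (n + 1) * Hpoly n 0 ^ 2) := by
  -- The damped energy along the ray `t ↦ t x` is antitone for `t ≥ 0`, whatever the sign of `x`.
  set F : ℝ → ℝ := fun t =>
    exp (-(t * x) ^ 2) * (Hpoly (n + 1) (t * x) ^ 2 + (n + 1) * Hpoly n (t * x) ^ 2) with hF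
  have hd : ∀ t, HasDerivAt F
      (-(2 * t * x ^ 2 * exp (-(t * x) ^ 2) * Hpoly (n + 1) (t * x) ^ 2)) t := by
    intro t
    have hl : HasDerivAt (fun t : ℝ => t * x) x t := by
      simpa using (hasDerivAt_id t).mul_const x
    have h1 := (hasDerivAt_Hpoly_succ n (t * x)).comp t hl
    have h2 := (hasDerivAt_Hpoly n (t * x)).comp t hl
    have h3 := ((hl.pow 2).neg).exp
    refine (h3.mul ((h1.pow 2).add ((h2.pow 2).const_mul ((n : ℝ) + 1)))).congr_deriv ?_
    simp
    ring
  have hanti : AntitoneOn F (Set.Ici 0) := by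
    apply antitoneOn_of_deriv_nonpos (convex_Ici 0)
    · exact fun t _ => (hd t).continuousAt.continuousWithinAt
    · exact fun t _ => (hd t).differentiableAt.differentiableWithinAt
    · intro t ht
      rw [interior_Ici] at ht
      have ht' : 0 < t := ht
      rw [(hd t).deriv, neg_nonpos]
      positivity
  have h := hanti (Set.mem_Ici.2 le_rfl) (Set.mem_Ici.2 zero_le_one) zero_le_one
  simp only [hF, one_mul, zero_mul] at h
  have h' := mul_le_mul_of_nonneg_left h (exp_pos (x ^ 2)).le
  rw [← mul_assoc, ← exp_add] at h'
  simpa using h'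

lemma Hpoly_sq_le (n : ℕ) (x : ℝ) :
    Hpoly (n + 1) x ^ 2 ≤ exp (x ^ 2) * (2 * ((n + 1).factorial / √((n : ℝ) + 1))) := by
  have hE := energy_bound n x
  have h0 : 0 ≤ ((n : ℝ) + 1) * Hpoly n x ^ 2 := by positivity
  have h1 : Hpoly (n + 1) 0 ^ 2 ≤ (n + 1).factorial / √((n : ℝ) + 1) := by
    refine (Hpoly_zero_sq_le (n + 1)).trans ?_
    push_cast
    gcongr
    linarith
  have h2 : ((n : ℝ) + 1) * Hpoly n 0 ^ 2 ≤ (n + 1).factorial / √((n : ℝ) + 1) := by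
    rw [Nat.factorial_succ]
    push_cast
    rw [mul_div_assoc]
    gcongr
    exact Hpoly_zero_sq_le n
  calc _ ≤ exp (x ^ 2) * (Hpoly (n + 1) 0 ^ 2 + (n + 1) * Hpoly n 0 ^ 2) := by linarith
    _ ≤ _ := by
      gcongr
      linarith

/-- For every `M > 0` there exist `K > 0` and `k₀` such that for all `k ≥ k₀` and all
`x` with `|x| ≤ M`, one has `|H_k(x)| ≤ K * √(k!) / k^(1/4)`. -/
theorem stmt_0 (M : ℝ) (hM : 0 < M) :
    ∃ K : ℝ, 0 < K ∧ ∃ k₀ : ℕ, ∀ k : ℕ, k₀ ≤ k → ∀ x : ℝ, |x| ≤ M →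
      |Hpoly k x| ≤ K * Real.sqrt (Nat.factorial k) / (k : ℝ) ^ ((1 : ℝ) / 4) := by
  refine ⟨√(2 * exp (M ^ 2)), by positivity, 1, fun k hk x hx => ?_⟩
  obtain ⟨n, rfl⟩ : ∃ n, k = n + 1 := ⟨k - 1, by omega⟩
  refine abs_le_of_sq_le_sq ?_ (by positivity)
  have hk4 : ((((n + 1 : ℕ) : ℝ)) ^ ((1 : ℝ) / 4)) ^ 2 = √((n : ℝ) + 1) := by
    rw [← Real.rpow_natCast, ← Real.rpow_mul (by positivity), Real.sqrt_eq_rpow]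
    push_cast
    norm_num
  rw [div_pow, mul_pow, hk4, Real.sq_sqrt (by positivity), Real.sq_sqrt (by positivity)]
  have hx2 : x ^ 2 ≤ M ^ 2 := sq_le_sq' (abs_le.1 hx).1 (abs_le.1 hx).2
  calc Hpoly (n + 1) x ^ 2
      ≤ exp (x ^ 2) * (2 * ((n + 1).factorial / √((n : ℝ) + 1))) := Hpoly_sq_le n x
    _ ≤ exp (M ^ 2) * (2 * ((n + 1).factorial / √((n : ℝ) + 1))) := by gcongr
    _ = _ := by ring
end

section
/- Let φ : ℝ → ℝ be continuous with polynomial growth and let t > 0. Then P_t φ is infinitely differentiable on ℝ, and for every k ∈ ℕ and every x ∈ ℝ, the k-th derivative of P_t φ at x equals (e^{-kt}/(1-e^{-2t})^{k/2}) ∫_ℝ H_k(y) φ(x e^{-t} + (1-e^{-2t})^{1/2} y) γ(dy). -/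
/-!
Put `a = e^{-t}`, `s = √(1 - e^{-2t})` and `c = a / s`. Translating the variable by `c x` moves
the dependence on `x` from the merely continuous `φ` to the smooth Gaussian weight:
`∫ H_k(y) φ(a x + s y) γ(dy) = (2π)^{-1/2} ∫ H_k(z - c x) e^{-(z - c x)²/2} φ(s z) dz`.
Since `(H_k e^{-u²/2})' = -H_{k+1} e^{-u²/2}`, differentiating under the integral sign gives `c`
times the same expression with `k + 1` in place of `k` (`hasDerivAt_mehlerIntegral`), and iterating
from `k = 0` yields both smoothness and the formula. The domination (`weight_bound`) holds because
polynomial growth is beaten by `e^{b u²}` for every `b > 0`, so that, locally uniformly in `x`, the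
integrand is at most a constant times `e^{-z²/8}`.
-/

open MeasureTheory ProbabilityTheory

/-- The standard Gaussian measure on `ℝ`. -/
noncomputable def gaussγ : Measure ℝ := gaussianReal 0 1

/-- A function `f : ℝ → ℝ` has polynomial growth. -/
def PolyGrowth (f : ℝ → ℝ) : Prop :=
  ∃ C : ℝ, 0 < C ∧ ∃ d : ℕ, ∀ x : ℝ, |f x| ≤ C * (1 + |x| ^ d)

/-- The Ornstein–Uhlenbeck (Mehler) semigroup. -/
noncomputable def Pt (t : ℝ) (φ : ℝ → ℝ) (x : ℝ) : ℝ :=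
  ∫ y, φ (x * Real.exp (-t) + Real.sqrt (1 - Real.exp (-2 * t)) * y) ∂gaussγ

/-- The Hermite polynomial times the unnormalised Gaussian density. -/
noncomputable def hermiteWeight (k : ℕ) (u : ℝ) : ℝ := Hpoly k u * Real.exp (-(u ^ 2 / 2))

lemma abs_pow_le_exp_sq (d : ℕ) (b : ℝ) (hb : 0 < b) :
    ∃ C : ℝ, 0 ≤ C ∧ ∀ x : ℝ, |x| ^ d ≤ C * Real.exp (b * x ^ 2) := by
  refine ⟨1 + d.factorial / b ^ d, by positivity, fun x => ?_⟩
  have h1 : |x| ^ d ≤ 1 + (x ^ 2) ^ d := by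
    have h : (x ^ 2) ^ d = (|x| ^ d) ^ 2 := by rw [← sq_abs]; ring
    rw [h]
    nlinarith [sq_nonneg (|x| ^ d - 1), sq_nonneg (|x| ^ d)]
  have h2 := Real.pow_div_factorial_le_exp (b * x ^ 2) (by positivity) d
  have h3 : (1 : ℝ) ≤ Real.exp (b * x ^ 2) := Real.one_le_exp (by positivity)
  have h4 : (x ^ 2) ^ d = d.factorial / b ^ d * ((b * x ^ 2) ^ d / d.factorial) := by
    have : (d.factorial : ℝ) ≠ 0 := by positivity
    rw [mul_pow]
    field_simp
  calc |x| ^ d ≤ 1 + (x ^ 2) ^ d := h1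
    _ ≤ Real.exp (b * x ^ 2) + d.factorial / b ^ d * Real.exp (b * x ^ 2) := by
      rw [h4]; gcongr
    _ = _ := by ring

lemma PolyGrowth.le_exp_sq {f : ℝ → ℝ} (hf : PolyGrowth f) (b : ℝ) (hb : 0 < b) :
    ∃ C : ℝ, 0 ≤ C ∧ ∀ x : ℝ, |f x| ≤ C * Real.exp (b * x ^ 2) := by
  obtain ⟨A, hA, d, h⟩ := hf
  obtain ⟨B, hB, h'⟩ := abs_pow_le_exp_sq d b hb
  refine ⟨A * (1 + B), by positivity, fun x => (h x).trans ?_⟩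
  have h3 : (1 : ℝ) ≤ Real.exp (b * x ^ 2) := Real.one_le_exp (by positivity)
  calc A * (1 + |x| ^ d) ≤ A * (Real.exp (b * x ^ 2) + B * Real.exp (b * x ^ 2)) := by
        gcongr; exact h' x
    _ = _ := by ring

lemma aeval_le_exp_sq (p : Polynomial ℤ) (b : ℝ) (hb : 0 < b) :
    ∃ C : ℝ, 0 ≤ C ∧ ∀ x : ℝ, |Polynomial.aeval x p| ≤ C * Real.exp (b * x ^ 2) := by
  induction p using Polynomial.induction_on' with
  | add p q hp hq =>
    obtain ⟨A, hA, h⟩ := hp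
    obtain ⟨B, hB, h'⟩ := hq
    refine ⟨A + B, by positivity, fun x => ?_⟩
    rw [map_add, add_mul]
    exact (abs_add_le _ _).trans (add_le_add (h x) (h' x))
  | monomial n a =>
    obtain ⟨A, hA, h⟩ := abs_pow_le_exp_sq n b hb
    refine ⟨|(a : ℝ)| * A, by positivity, fun x => ?_⟩
    rw [Polynomial.aeval_monomial, abs_mul, abs_pow, mul_assoc]
    simp only [eq_intCast]
    gcongr
    exact h x

lemma continuous_hermiteWeight (k : ℕ) : Continuous (hermiteWeight k) := by
  unfold hermiteWeight Hpoly
  exact (Polynomial.continuous_aeval _).mul (by fun_prop)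

lemma hasDerivAt_hermiteWeight (k : ℕ) (u : ℝ) :
    HasDerivAt (hermiteWeight k) (-hermiteWeight (k + 1) u) u := by
  have h1 : HasDerivAt (Hpoly k) (Polynomial.aeval u (Polynomial.derivative
      (Polynomial.hermite k))) u := Polynomial.hasDerivAt_aeval _ _
  have h2 : HasDerivAt (fun u : ℝ => Real.exp (-(u ^ 2 / 2)))
      (Real.exp (-(u ^ 2 / 2)) * (-u)) u := by
    have := (((hasDerivAt_pow 2 u).div_const 2).neg).exp
    refine this.congr_deriv ?_
    simp
  refine (h1.mul h2).congr_deriv ?_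
  simp only [hermiteWeight, Hpoly, Polynomial.hermite_succ, map_sub, map_mul, Polynomial.aeval_X]
  ring

/-- The integrable majorant of the translated integrand, uniform over `|x| ≤ R`. -/
lemma weight_bound (k : ℕ) (c R C : ℝ) (hC : 0 ≤ C) (ψ : ℝ → ℝ)
    (hψ : ∀ z, |ψ z| ≤ C * Real.exp (1 / 16 * z ^ 2)) :
    ∃ D : ℝ, ∀ x z : ℝ, |x| ≤ R →
      |hermiteWeight k (z - c * x) * ψ z| ≤ D * Real.exp (-(1 / 8) * z ^ 2) := by
  obtain ⟨A, hA, h⟩ := aeval_le_exp_sq (Polynomial.hermite k) (1 / 8) (by norm_num)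
  refine ⟨A * C * Real.exp (3 / 8 * (c * R) ^ 2), fun x z hx => ?_⟩
  have hx2 : (c * x) ^ 2 ≤ (c * R) ^ 2 := by
    rw [mul_pow, mul_pow, ← sq_abs x]
    gcongr
  -- `u² ≥ z²/2 - (c x)²` for `u = z - c x`
  have hu : z ^ 2 / 2 - (c * R) ^ 2 ≤ (z - c * x) ^ 2 := by
    nlinarith [sq_nonneg (z - 2 * (c * x))]
  rw [abs_mul, hermiteWeight, abs_mul, Real.abs_exp]
  calc |Hpoly k (z - c * x)| * Real.exp (-((z - c * x) ^ 2 / 2)) * |ψ z|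
      ≤ (A * Real.exp (1 / 8 * (z - c * x) ^ 2)) * Real.exp (-((z - c * x) ^ 2 / 2))
          * (C * Real.exp (1 / 16 * z ^ 2)) := by
        gcongr
        · exact h _
        · exact hψ z
    _ = A * C * Real.exp (1 / 8 * (z - c * x) ^ 2 + -((z - c * x) ^ 2 / 2) + 1 / 16 * z ^ 2) := by
        rw [Real.exp_add, Real.exp_add]; ring
    _ ≤ A * C * Real.exp (3 / 8 * (c * R) ^ 2 + -(1 / 8) * z ^ 2) := by
        refine mul_le_mul_of_nonneg_left (Real.exp_le_exp.2 ?_) (by positivity)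
        linarith
    _ = _ := by rw [Real.exp_add]; ring

lemma hasDerivAt_translated (k : ℕ) (c C : ℝ) (hC : 0 ≤ C) (ψ : ℝ → ℝ) (hcont : Continuous ψ)
    (hψ : ∀ z, |ψ z| ≤ C * Real.exp (1 / 16 * z ^ 2)) (x₀ : ℝ) :
    HasDerivAt (fun x => ∫ z, hermiteWeight k (z - c * x) * ψ z)
      (c * ∫ z, hermiteWeight (k + 1) (z - c * x₀) * ψ z) x₀ := by
  obtain ⟨D₀, h₀⟩ := weight_bound k c (|x₀| + 1) C hC ψ hψ
  obtain ⟨D₁, h₁⟩ := weight_bound (k + 1) c (|x₀| + 1) C hC ψ hψ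
  have hint : Integrable (fun z : ℝ => Real.exp (-(1 / 8) * z ^ 2)) :=
    integrable_exp_neg_mul_sq (by norm_num)
  have hc : ∀ (j : ℕ) (x : ℝ), Continuous fun z => hermiteWeight j (z - c * x) * ψ z :=
    fun j x => ((continuous_hermiteWeight j).comp (by fun_prop)).mul hcont
  have key := hasDerivAt_integral_of_dominated_loc_of_deriv_le (μ := (volume : Measure ℝ))
    (F := fun x z => hermiteWeight k (z - c * x) * ψ z)
    (F' := fun x z => c * (hermiteWeight (k + 1) (z - c * x) * ψ z))
    (bound := fun z => |c| * (D₁ * Real.exp (-(1 / 8) * z ^ 2)))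
    (Metric.ball_mem_nhds x₀ one_pos)
    (Filter.Eventually.of_forall fun x => (hc k x).aestronglyMeasurable)
    ((hint.const_mul D₀).mono' (hc k x₀).aestronglyMeasurable
      (Filter.Eventually.of_forall fun z => h₀ x₀ z (by linarith)))
    ((hc (k + 1) x₀).const_mul c).aestronglyMeasurable
    (Filter.Eventually.of_forall fun z x hx => by
      rw [Metric.mem_ball, Real.dist_eq] at hx
      rw [Real.norm_eq_abs, abs_mul]
      have := abs_sub_abs_le_abs_sub x x₀
      exact mul_le_mul_of_nonneg_left (h₁ x z (by linarith)) (abs_nonneg c))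
    ((hint.const_mul D₁).const_mul |c|)
    (Filter.Eventually.of_forall fun z x _ => by
      have hl : HasDerivAt (fun x : ℝ => z - c * x) (-c) x := by
        simpa using ((hasDerivAt_id x).const_mul c).const_sub z
      refine (((hasDerivAt_hermiteWeight k (z - c * x)).comp x hl).mul_const (ψ z)).congr_deriv ?_
      ring)
  refine key.2.congr_deriv ?_
  rw [integral_const_mul]

/-- The integral `∫ H_k(y) φ(a x + s y) γ(dy)` of the derivative formula. -/
noncomputable def mehlerIntegral (φ : ℝ → ℝ) (a s : ℝ) (k : ℕ) (x : ℝ) : ℝ :=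
  ∫ y, Hpoly k y * φ (x * a + s * y) ∂gaussγ

lemma mehlerIntegral_eq_translated (φ : ℝ → ℝ) (a s : ℝ) (hs : 0 < s) (k : ℕ) (x : ℝ) :
    mehlerIntegral φ a s k x =
      (√(2 * Real.pi))⁻¹ * ∫ z, hermiteWeight k (z - a / s * x) * φ (s * z) := by
  rw [mehlerIntegral, gaussγ, integral_gaussianReal_eq_integral_smul (by norm_num),
    ← integral_sub_right_eq_self _ (a / s * x), ← integral_const_mul]
  congr 1
  ext z
  have : x * a + s * (z - a / s * x) = s * z := by field_simp; ring
  rw [this]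
  simp only [gaussianPDFReal, hermiteWeight, smul_eq_mul, NNReal.coe_one, mul_one, sub_zero,
    neg_div]
  ring

lemma hasDerivAt_mehlerIntegral (φ : ℝ → ℝ) (hcont : Continuous φ) (hgrowth : PolyGrowth φ)
    (a s : ℝ) (hs : 0 < s) (k : ℕ) (x : ℝ) :
    HasDerivAt (mehlerIntegral φ a s k) (a / s * mehlerIntegral φ a s (k + 1) x) x := by
  -- this exponent makes the bound on `z ↦ φ (s z)` equal to `C e^{z²/16}`
  obtain ⟨C, hC, h⟩ := hgrowth.le_exp_sq (1 / (16 * s ^ 2)) (by positivity)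
  have key := (hasDerivAt_translated k (a / s) C hC (fun z => φ (s * z)) (by fun_prop)
    (fun z => by
      convert h (s * z) using 3
      field_simp) x).const_mul (√(2 * Real.pi))⁻¹
  rw [mehlerIntegral_eq_translated φ a s hs]
  have hfun : mehlerIntegral φ a s k = fun x => (√(2 * Real.pi))⁻¹ *
      ∫ z, hermiteWeight k (z - a / s * x) * φ (s * z) :=
    funext fun x => mehlerIntegral_eq_translated φ a s hs k x
  rw [hfun]
  refine key.congr_deriv ?_
  ring

lemma iteratedDeriv_mehlerIntegral (φ : ℝ → ℝ) (hcont : Continuous φ) (hgrowth : PolyGrowth φ)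
    (a s : ℝ) (hs : 0 < s) (k : ℕ) :
    iteratedDeriv k (mehlerIntegral φ a s 0) =
      fun x => (a / s) ^ k * mehlerIntegral φ a s k x := by
  induction k with
  | zero => simp
  | succ k ih =>
    rw [iteratedDeriv_succ, ih]
    ext x
    rw [((hasDerivAt_mehlerIntegral φ hcont hgrowth a s hs k x).const_mul _).deriv]
    ring

/-- For continuous `φ` of polynomial growth and `t > 0`, `P_t φ` is infinitely
differentiable, with `k`-th derivative given by the Mehler-type formula. -/
theorem stmt_5 (φ : ℝ → ℝ) (hcont : Continuous φ) (hgrowth : PolyGrowth φ)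
    (t : ℝ) (ht : 0 < t) :
    ContDiff ℝ (⊤ : ℕ∞) (Pt t φ) ∧
    ∀ (k : ℕ) (x : ℝ),
      iteratedDeriv k (Pt t φ) x
        = (Real.exp (-(k : ℝ) * t) / (1 - Real.exp (-2 * t)) ^ ((k : ℝ) / 2))
          * ∫ y, Hpoly k y
              * φ (x * Real.exp (-t) + (1 - Real.exp (-2 * t)) ^ ((1 : ℝ) / 2) * y) ∂gaussγ := by
  have hv : 0 < 1 - Real.exp (-2 * t) := by
    have : Real.exp (-2 * t) < 1 := Real.exp_lt_one_iff.2 (by linarith)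
    linarith
  have hs := Real.sqrt_pos.2 hv
  have hP : Pt t φ = mehlerIntegral φ (Real.exp (-t)) (√(1 - Real.exp (-2 * t))) 0 := by
    ext x
    simp [Pt, mehlerIntegral, Hpoly]
  have hiter := iteratedDeriv_mehlerIntegral φ hcont hgrowth (Real.exp (-t)) _ hs
  rw [hP]
  refine ⟨contDiff_of_differentiable_iteratedDeriv fun k _ => ?_, fun k x => ?_⟩
  · rw [hiter]
    exact fun x =>
      ((hasDerivAt_mehlerIntegral φ hcont hgrowth _ _ hs k x).const_mul _).differentiableAt
  · rw [hiter, ← Real.sqrt_eq_rpow]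
    simp only [mehlerIntegral]
    rw [div_pow, ← Real.exp_nat_mul]
    congr 2
    · congr 1; ring
    · rw [Real.sqrt_eq_rpow, ← Real.rpow_natCast, ← Real.rpow_mul hv.le]
      congr 1; ring
end

section
/- Let C > 0, d ∈ ℕ, and let φ : ℝ → ℝ be continuous with |φ(x)| ≤ C(1+|x|^d) for all x. Then for every k ∈ ℕ there exists a constant A > 0, depending only on k and d (not on φ, C), such that for all t ≥ 1 and all x ∈ ℝ, the k-th derivative of P_t φ satisfies |(d^k/dx^k)(P_t φ)(x)| ≤ e^{-kt} · C · A · (1+|x|^d). -/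
/-!
With `σ = √(1 - e^{-2t})` and `b = e^{-t}/σ`, translating the Gaussian moves the `x`-dependence
from `φ` to the exponential weight: for `ψ z = φ (σ z)`,
`P_t φ(x) = ∫ ψ(z) e^{uz - u²/2} γ(dz)` at `u = b x` (`integral_shift`).
Differentiating in `u` under the integral sign (`hasDerivAt_shiftInt`) turns a polynomial factor
`p(z - u)` into `(X p - Dp)(z - u)`, which is the Hermite recursion, so
`(P_t φ)^{(k)}(x) = b^k ∫ ψ(z) He_k(z - u) e^{uz - u²/2} γ(dz) = b^k ∫ φ(e^{-t}x + σw) He_k(w) γ(dw)`,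
the second equality by translating back. For `t ≥ 1` one has `σ ≥ 1/2`, so `b^k ≤ 2^k e^{-kt}`, and
the growth bound on `φ` bounds the integral by
`C 2^d (1 + |x|^d) ∫ (1 + |w|^d) |He_k(w)| γ(dw)`.
-/

open MeasureTheory ProbabilityTheory

open Polynomial

/-- The Cameron–Martin formula for `γ`. -/
lemma integral_shift (f : ℝ → ℝ) (u : ℝ) :
    ∫ w, f (w + u) ∂gaussγ = ∫ z, f z * Real.exp (u * z - u ^ 2 / 2) ∂gaussγ := by
  unfold gaussγ
  rw [integral_gaussianReal_eq_integral_smul one_ne_zero,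
    integral_gaussianReal_eq_integral_smul one_ne_zero,
    ← integral_add_right_eq_self
      (fun z => gaussianPDFReal 0 1 z • (f z * Real.exp (u * z - u ^ 2 / 2))) u]
  congr 1
  ext w
  simp only [smul_eq_mul, gaussianPDFReal]
  have : Real.exp (-(w - 0) ^ 2 / (2 * ((1 : NNReal) : ℝ)))
      = Real.exp (-(w + u - 0) ^ 2 / (2 * ((1 : NNReal) : ℝ))) *
        Real.exp (u * (w + u) - u ^ 2 / 2) := by
    rw [← Real.exp_add]
    congr 1
    push_cast
    ring
  rw [this]
  ring

lemma integrable_exp_abs (c : ℝ) : Integrable (fun z : ℝ => Real.exp (c * |z|)) gaussγ :=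
  integrable_exp_mul_abs (X := id) (integrable_exp_mul_gaussianReal c)
    (integrable_exp_mul_gaussianReal (-c))

lemma abs_pow_le_exp (n : ℕ) (w : ℝ) : |w| ^ n ≤ n.factorial * Real.exp |w| := by
  have h := Real.pow_div_factorial_le_exp |w| (abs_nonneg w) n
  rwa [div_le_iff₀' (by positivity)] at h

lemma poly_bound (p : ℝ[X]) : ∃ M : ℝ, 0 ≤ M ∧ ∀ w, |p.eval w| ≤ M * Real.exp |w| := by
  induction p using Polynomial.induction_on' with
  | add p q hp hq =>
    obtain ⟨M, hM, h⟩ := hp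
    obtain ⟨N, hN, h'⟩ := hq
    refine ⟨M + N, by positivity, fun w => ?_⟩
    rw [eval_add, add_mul]
    exact (abs_add_le _ _).trans (add_le_add (h w) (h' w))
  | monomial n a =>
    refine ⟨|a| * n.factorial, by positivity, fun w => ?_⟩
    rw [eval_monomial, abs_mul, abs_pow, mul_assoc]
    exact mul_le_mul_of_nonneg_left (abs_pow_le_exp n w) (abs_nonneg a)

/-- The integral `∫ ψ(z) p(z - u) e^{uz - u²/2} γ(dz)`, i.e. `∫ ψ(w + u) p(w) γ(dw)`. -/
noncomputable def shiftInt (ψ : ℝ → ℝ) (p : ℝ[X]) (u : ℝ) : ℝ :=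
  ∫ z, ψ z * p.eval (z - u) * Real.exp (u * z - u ^ 2 / 2) ∂gaussγ

/-- A bound on the integrand of `shiftInt`, locally uniform in `u`. -/
lemma integrand_bound {ψ : ℝ → ℝ} {K M R : ℝ} {p : ℝ[X]} (hψ : ∀ z, |ψ z| ≤ K * Real.exp |z|)
    (hp : ∀ w, |p.eval w| ≤ M * Real.exp |w|) (hM : 0 ≤ M) {u : ℝ} (hu : |u| ≤ R) (z : ℝ) :
    |ψ z * p.eval (z - u) * Real.exp (u * z - u ^ 2 / 2)|
      ≤ K * M * Real.exp R * Real.exp ((2 + R) * |z|) := by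
  have hK : 0 ≤ K := nonneg_of_mul_nonneg_left ((abs_nonneg _).trans (hψ 0)) (Real.exp_pos _)
  rw [abs_mul, abs_mul, Real.abs_exp]
  have h1 : |p.eval (z - u)| ≤ M * Real.exp (|z| + R) := by
    refine (hp _).trans ?_
    gcongr
    exact (abs_sub _ _).trans (by gcongr)
  have h2 : Real.exp (u * z - u ^ 2 / 2) ≤ Real.exp (R * |z|) := by
    gcongr
    have : u * z ≤ R * |z| := (le_abs_self _).trans (by rw [abs_mul]; gcongr)
    nlinarith [sq_nonneg u]
  calc _ ≤ (K * Real.exp |z|) * (M * Real.exp (|z| + R)) * Real.exp (R * |z|) := by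
        gcongr
        exact hψ z
    _ = K * M * (Real.exp |z| * Real.exp (|z| + R) * Real.exp (R * |z|)) := by ring
    _ = K * M * (Real.exp R * Real.exp ((2 + R) * |z|)) := by
        simp only [← Real.exp_add]
        congr 2
        ring
    _ = _ := by ring

lemma hasDerivAt_shiftInt {ψ : ℝ → ℝ} {K : ℝ} (hc : Continuous ψ)
    (hψ : ∀ z, |ψ z| ≤ K * Real.exp |z|) (p : ℝ[X]) (u : ℝ) :
    HasDerivAt (shiftInt ψ p) (shiftInt ψ (X * p - derivative p) u) u := by
  obtain ⟨M, hM, hp⟩ := poly_bound p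
  obtain ⟨N, hN, hq⟩ := poly_bound (X * p - derivative p)
  have hmeas : ∀ (q : ℝ[X]) (v : ℝ), AEStronglyMeasurable
      (fun z => ψ z * q.eval (z - v) * Real.exp (v * z - v ^ 2 / 2)) gaussγ := fun q v =>
    Continuous.aestronglyMeasurable
      ((hc.mul (q.continuous.comp (continuous_id.sub continuous_const))).mul (by fun_prop))
  refine (hasDerivAt_integral_of_dominated_loc_of_deriv_le
    (s := Metric.ball u 1)
    (F := fun v z => ψ z * p.eval (z - v) * Real.exp (v * z - v ^ 2 / 2))
    (F' := fun v z => ψ z * (X * p - derivative p).eval (z - v) * Real.exp (v * z - v ^ 2 / 2))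
    (bound := fun z => K * N * Real.exp (|u| + 1) * Real.exp ((2 + (|u| + 1)) * |z|))
    (Metric.ball_mem_nhds u one_pos)
    (Filter.Eventually.of_forall fun v => hmeas p v) ?_ (hmeas _ u) ?_ ?_ ?_).2
  · exact ((integrable_exp_abs (2 + |u|)).const_mul (K * M * Real.exp |u|)).mono' (hmeas p u)
      (Filter.Eventually.of_forall fun z => integrand_bound hψ hp hM le_rfl z)
  · refine Filter.Eventually.of_forall fun z v hv => integrand_bound hψ hq hN ?_ z
    rw [Metric.mem_ball, Real.dist_eq] at hv
    have := abs_add_le u (v - u)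
    rw [add_sub_cancel] at this
    linarith
  · exact (integrable_exp_abs _).const_mul _
  · refine Filter.Eventually.of_forall fun z v _ => ?_
    have h1 : HasDerivAt (fun v => p.eval (z - v)) ((derivative p).eval (z - v) * (-1)) v :=
      (p.hasDerivAt (z - v)).comp v ((hasDerivAt_id v).const_sub z)
    have h2 : HasDerivAt (fun v : ℝ => v * z - v ^ 2 / 2) (z - v) v := by
      have := ((hasDerivAt_id v).mul_const z).sub (((hasDerivAt_id v).pow 2).div_const 2)
      refine this.congr_deriv ?_
      simp
    refine ((h1.const_mul (ψ z)).mul h2.exp).congr_deriv ?_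
    simp only [eval_sub, eval_mul, eval_X]
    ring

/-- The probabilists' Hermite polynomials with real coefficients. -/
noncomputable def hermR (k : ℕ) : ℝ[X] := (hermite k).map (Int.castRingHom ℝ)

lemma hermR_succ (k : ℕ) : hermR (k + 1) = X * hermR k - derivative (hermR k) := by
  simp [hermR, hermite_succ]

lemma iteratedDeriv_shiftInt {ψ : ℝ → ℝ} {K : ℝ} (hc : Continuous ψ)
    (hψ : ∀ z, |ψ z| ≤ K * Real.exp |z|) (b : ℝ) (k : ℕ) :
    iteratedDeriv k (fun x => shiftInt ψ (hermR 0) (b * x))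
      = fun x => b ^ k * shiftInt ψ (hermR k) (b * x) := by
  induction k with
  | zero => simp
  | succ k ih =>
    rw [iteratedDeriv_succ, ih]
    ext x
    have h1 : HasDerivAt (fun x : ℝ => b * x) b x := by
      simpa using (hasDerivAt_id x).const_mul b
    have h2 : HasDerivAt (fun x => b ^ k * shiftInt ψ (hermR k) (b * x)) _ x :=
      ((hasDerivAt_shiftInt hc hψ (hermR k) (b * x)).comp x h1).const_mul (b ^ k)
    rw [h2.deriv, hermR_succ]
    ring

lemma integrable_moment (k d : ℕ) :
    Integrable (fun w : ℝ => (1 + |w| ^ d) * |(hermR k).eval w|) gaussγ := by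
  obtain ⟨M, hM, hp⟩ := poly_bound (hermR k)
  refine ((integrable_exp_abs 2).const_mul ((1 + d.factorial) * M)).mono' ?_ ?_
  · exact Continuous.aestronglyMeasurable
      ((by fun_prop : Continuous fun w : ℝ => 1 + |w| ^ d).mul (hermR k).continuous.abs)
  · refine Filter.Eventually.of_forall fun w => ?_
    rw [Real.norm_of_nonneg (by positivity)]
    have h1 : 1 + |w| ^ d ≤ (1 + d.factorial) * Real.exp |w| := by
      have := abs_pow_le_exp d w
      have := Real.one_le_exp (abs_nonneg w)
      linarith
    calc _ ≤ ((1 + d.factorial) * Real.exp |w|) * (M * Real.exp |w|) := by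
          gcongr
          exact hp w
      _ = _ := by rw [two_mul, Real.exp_add]; ring

lemma growth_split (d : ℕ) {a s : ℝ} (ha : |a| ≤ 1) (hs : |s| ≤ 1) (x w : ℝ) :
    1 + |x * a + s * w| ^ d ≤ 2 ^ d * (1 + |x| ^ d) * (1 + |w| ^ d) := by
  have h0 : |x * a + s * w| ≤ |x| + |w| := by
    refine (abs_add_le _ _).trans ?_
    rw [abs_mul, abs_mul]
    exact add_le_add (mul_le_of_le_one_right (abs_nonneg _) ha)
      (mul_le_of_le_one_left (abs_nonneg _) hs)
  have h1 : |x| + |w| ≤ 2 * max |x| |w| := by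
    rw [two_mul]; exact add_le_add (le_max_left _ _) (le_max_right _ _)
  have h2 : max |x| |w| ^ d ≤ |x| ^ d + |w| ^ d := by
    rcases max_choice |x| |w| with h | h <;> rw [h]
    · linarith [pow_nonneg (abs_nonneg w) d]
    · linarith [pow_nonneg (abs_nonneg x) d]
  have h3 : |x * a + s * w| ^ d ≤ 2 ^ d * (|x| ^ d + |w| ^ d) := by
    refine (pow_le_pow_left₀ (abs_nonneg _) (h0.trans h1) d).trans ?_
    rw [mul_pow]
    gcongr
  have h4 : (1 : ℝ) ≤ 2 ^ d := one_le_pow₀ one_le_two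
  have h5 : 0 ≤ (2 : ℝ) ^ d * (|x| ^ d * |w| ^ d) := by positivity
  linarith

/-- For every `k` and `d` there is `A > 0`, depending only on `k` and `d`, such that
for every continuous `φ` with `|φ(x)| ≤ C (1+|x|^d)`, all `t ≥ 1` and all `x`,
`|(d^k/dx^k)(P_t φ)(x)| ≤ e^{-kt} C A (1+|x|^d)`. -/
theorem stmt_6 (k d : ℕ) :
    ∃ A : ℝ, 0 < A ∧ ∀ (C : ℝ), 0 < C → ∀ φ : ℝ → ℝ, Continuous φ →
      (∀ x : ℝ, |φ x| ≤ C * (1 + |x| ^ d)) →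
      ∀ t : ℝ, 1 ≤ t → ∀ x : ℝ,
        |iteratedDeriv k (Pt t φ) x| ≤ Real.exp (-(k : ℝ) * t) * C * A * (1 + |x| ^ d) := by
  set I : ℝ := ∫ w, (1 + |w| ^ d) * |(hermR k).eval w| ∂gaussγ with hI
  have hI0 : 0 ≤ I := integral_nonneg fun w => by positivity
  -- Adding `1` makes positivity of the constant immediate.
  refine ⟨2 ^ k * 2 ^ d * (I + 1), by positivity, fun C hC φ hφ hb t ht x => ?_⟩
  set a := Real.exp (-t) with ha
  set s := Real.sqrt (1 - Real.exp (-2 * t)) with hs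
  have hexp : Real.exp (-2 * t) ≤ 3 / 4 := by
    have h1 : 1 + 2 * t ≤ Real.exp (2 * t) := by linarith [Real.add_one_le_exp (2 * t)]
    rw [show -2 * t = -(2 * t) by ring, Real.exp_neg]
    exact (inv_anti₀ (by norm_num : (0 : ℝ) < 3) (by linarith)).trans (by norm_num)
  have hs2 : 1 / 2 ≤ s := Real.le_sqrt_of_sq_le (by linarith)
  have hs0 : 0 < s := by linarith
  have hs1 : |s| ≤ 1 := by
    rw [abs_of_pos hs0]
    exact Real.sqrt_le_one.mpr (by linarith [Real.exp_pos (-2 * t)])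
  have ha0 : 0 < a := Real.exp_pos _
  have ha1 : |a| ≤ 1 := by
    rw [abs_of_pos ha0]
    exact Real.exp_le_one_iff.mpr (by linarith)
  have hψc : Continuous fun z => φ (s * z) := hφ.comp (by fun_prop)
  have hψ : ∀ z, |φ (s * z)| ≤ C * (1 + d.factorial) * Real.exp |z| := fun z => by
    have h1 : |s * z| ≤ |z| := by
      rw [abs_mul]; exact mul_le_of_le_one_left (abs_nonneg _) hs1
    have h2 := pow_le_pow_left₀ (abs_nonneg _) h1 d
    have h3 := abs_pow_le_exp d z
    have h4 := Real.one_le_exp (abs_nonneg z)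
    refine (hb _).trans ?_
    rw [mul_assoc]
    gcongr
    linarith
  -- Undoing the translation, for any polynomial factor.
  have hback : ∀ (p : ℝ[X]) (y : ℝ), shiftInt (fun z => φ (s * z)) p (a / s * y)
      = ∫ w, φ (y * a + s * w) * p.eval w ∂gaussγ := fun p y => by
    rw [shiftInt, ← integral_shift
      (fun z => φ (s * z) * p.eval (z - a / s * y)) (a / s * y)]
    congr 1
    ext w
    rw [add_sub_cancel_right]
    congr 2
    field_simp
    ring
  have hPt : Pt t φ = fun y => shiftInt (fun z => φ (s * z)) (hermR 0) (a / s * y) := by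
    ext y
    rw [hback]
    simp [hermR, Pt, a, s]
  rw [hPt, iteratedDeriv_shiftInt hψc hψ]
  simp only
  rw [hback, abs_mul]
  have hint : |∫ w, φ (x * a + s * w) * (hermR k).eval w ∂gaussγ|
      ≤ C * (2 ^ d * (1 + |x| ^ d)) * I := by
    rw [hI, ← integral_const_mul, ← Real.norm_eq_abs]
    refine norm_integral_le_of_norm_le ((integrable_moment k d).const_mul _)
      (Filter.Eventually.of_forall fun w => ?_)
    rw [Real.norm_eq_abs, abs_mul]
    calc _ ≤ (C * (2 ^ d * (1 + |x| ^ d) * (1 + |w| ^ d))) * |(hermR k).eval w| := by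
          gcongr
          exact (hb _).trans (by gcongr; exact growth_split d ha1 hs1 x w)
      _ = _ := by ring
  have hbk : |(a / s) ^ k| ≤ 2 ^ k * Real.exp (-(k : ℝ) * t) := by
    rw [show -(k : ℝ) * t = k * (-t) by ring, Real.exp_nat_mul, ← mul_pow,
      abs_of_nonneg (by positivity)]
    gcongr
    rw [div_le_iff₀ hs0]
    nlinarith
  calc _ ≤ (2 ^ k * Real.exp (-(k : ℝ) * t)) * (C * (2 ^ d * (1 + |x| ^ d)) * I) := by
        gcongr
    _ ≤ (2 ^ k * Real.exp (-(k : ℝ) * t)) * (C * (2 ^ d * (1 + |x| ^ d)) * (I + 1)) := by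
        gcongr
        linarith
    _ = _ := by ring
end

section
/- Let φ : ℝ → ℝ be continuous and bounded. Then for every x ∈ ℝ, |S(φ)(x)| ≤ (2 + |x|) · sup_{y ∈ ℝ} |φ(y)|. -/
/-!
The proof writes `S(φ)(x) + φ(x)` as the integral of `φ` against an explicit density. Substituting
`z = x e^{-t} + √(1 - e^{-2t}) y` in the inner integral and exchanging the integrals
(`kern_integrable`), the double integral becomes `∫ φ(z) K(x, z) dz`, where `K` is computed by the
fundamental theorem of calculus in `t` (`kern_integral`). With `g` the Gaussian density, `Φ` its
distribution function and `Q = 1 - Φ`,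
`K(x, z) = (g z / g x) Φ(x)` for `z > x` and `K(x, z) = -(g z / g x) Q(x)` for `z < x`.

Bounding the two integrals separately only gives the constant `√(π/2) > 1` in front of `|x|`, so
the density `g - x K(x, ·)` has to be treated as a whole. By reflection let `x ≥ 0`; its `L¹` norm is
`Q |1 - x Φ / g| + Φ (1 + x Q / g)`, which is `1` when `x Φ ≤ g`, and otherwise
`1 - 2 Q + 2 x Q Φ / g`. So it is at most `1 + x` as soon as `2 x Q Φ ≤ g (x + 2 Q)`
(`tail_ineq`). For `x ≤ 0.8` this quadratic inequality in `Q` holds for all `Q ≥ 0`, and for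
`x ≥ 0.8` it follows from the rational bound `Q ≤ g (x² + 2) / (x³ + 3x)` (`mills`).
-/

open MeasureTheory ProbabilityTheory

/-- The operator `S`:
`S(φ)(x) = ∫ φ dγ - φ(x) - x ∫_0^∞ (e^{-t}/√(1-e^{-2t})) (∫ y φ(xe^{-t}+√(1-e^{-2t})y) γ(dy)) dt`. -/
noncomputable def Sop (φ : ℝ → ℝ) (x : ℝ) : ℝ :=
  (∫ y, φ y ∂gaussγ) - φ x
    - x * ∫ t in Set.Ioi (0 : ℝ),
        (Real.exp (-t) / Real.sqrt (1 - Real.exp (-2 * t)))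
          * ∫ y, y * φ (x * Real.exp (-t) + Real.sqrt (1 - Real.exp (-2 * t)) * y) ∂gaussγ

section Gauss

open Filter Topology Set

/-! ### Gaussian density and distribution function -/

/-- The standard Gaussian density. -/
noncomputable def gd (x : ℝ) : ℝ := (Real.sqrt (2 * Real.pi))⁻¹ * Real.exp (-(1 / 2) * x ^ 2)

/-- The centred Gaussian distribution function `Φ - 1/2`, where `Φ` is the usual one. -/
noncomputable def gPsi (x : ℝ) : ℝ := ∫ s in (0 : ℝ)..x, gd s

lemma gd_pos (x : ℝ) : 0 < gd x := by unfold gd; positivity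

lemma gd_neg (x : ℝ) : gd (-x) = gd x := by simp [gd]

lemma gd_continuous : Continuous gd := by unfold gd; fun_prop

lemma gd_integrable : Integrable gd :=
  (integrable_exp_neg_mul_sq (by norm_num : (0 : ℝ) < 1 / 2)).const_mul _

lemma id_mul_gd_integrable : Integrable (fun y => y * gd y) := by
  refine ((integrable_mul_exp_neg_mul_sq (by norm_num : (0 : ℝ) < 1 / 2)).const_mul
    (Real.sqrt (2 * Real.pi))⁻¹).congr (ae_of_all _ fun y => ?_)
  simp only [gd]; ring

lemma integral_gaussγ (f : ℝ → ℝ) : ∫ y, f y ∂gaussγ = ∫ y, gd y * f y := by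
  rw [gaussγ, integral_gaussianReal_eq_integral_smul one_ne_zero]
  refine integral_congr_ae (ae_of_all _ fun y => ?_)
  simp only [gaussianPDFReal, gd, smul_eq_mul, NNReal.coe_one, mul_one, sub_zero]
  congr 3; ring

lemma gd_hasDerivAt (x : ℝ) : HasDerivAt gd (-x * gd x) x := by
  unfold gd
  have h := ((((hasDerivAt_id x).pow 2).const_mul (-(1 / 2) : ℝ)).exp).const_mul
    (Real.sqrt (2 * Real.pi))⁻¹
  refine h.congr_deriv ?_
  simp; ring

lemma gPsi_hasDerivAt (x : ℝ) : HasDerivAt gPsi (gd x) x :=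
  gd_continuous.integral_hasStrictDerivAt 0 x |>.hasDerivAt

lemma gPsi_neg (x : ℝ) : gPsi (-x) = -gPsi x := by
  unfold gPsi
  have h := intervalIntegral.integral_comp_neg (a := 0) (b := x) gd
  simp only [gd_neg, neg_zero] at h
  rw [h, intervalIntegral.integral_symm]

lemma gPsi_tendsto_atTop : Tendsto gPsi atTop (𝓝 (1 / 2)) := by
  have h := intervalIntegral_tendsto_integral_Ioi (0 : ℝ) gd_integrable.integrableOn tendsto_id
  have e : ∫ x in Ioi (0 : ℝ), gd x = 1 / 2 := by
    simp only [gd]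
    rw [integral_const_mul, integral_gaussian_Ioi]
    have : Real.pi / (1 / 2) = 2 * Real.pi := by ring
    rw [this]
    have : Real.sqrt (2 * Real.pi) ≠ 0 := by positivity
    field_simp
  rw [e] at h
  exact h

lemma gPsi_tendsto_atBot : Tendsto gPsi atBot (𝓝 (-(1 / 2))) := by
  have h := (gPsi_tendsto_atTop.comp tendsto_neg_atBot_atTop).neg
  refine h.congr fun x => ?_
  simp [gPsi_neg]

lemma integral_Ioi_gd (x : ℝ) : ∫ s in Ioi x, gd s = 1 / 2 - gPsi x :=
  integral_Ioi_of_hasDerivAt_of_tendsto' (fun s _ => gPsi_hasDerivAt s)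
    gd_integrable.integrableOn gPsi_tendsto_atTop

lemma integral_Iic_gd (x : ℝ) : ∫ s in Iic x, gd s = 1 / 2 + gPsi x := by
  rw [integral_Iic_of_hasDerivAt_of_tendsto' (fun s _ => gPsi_hasDerivAt s)
    gd_integrable.integrableOn gPsi_tendsto_atBot]
  ring

lemma gd_tendsto_atTop : Tendsto gd atTop (𝓝 0) := by
  have h : Tendsto (fun x : ℝ => -(1 / 2) * x ^ 2) atTop atBot :=
    (tendsto_pow_atTop two_ne_zero).const_mul_atTop_of_neg (by norm_num)
  have := (Real.tendsto_exp_atBot.comp h).const_mul (Real.sqrt (2 * Real.pi))⁻¹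
  rw [mul_zero] at this
  exact this

/-! ### The tail inequality -/

/-- The second-order rational upper bound for the Gaussian tail (Mills ratio). It holds because
`Q - g U`, with `U = (x² + 2) / (x³ + 3x)`, is nondecreasing and vanishes at infinity. -/
lemma mills {x : ℝ} (hx : 0 < x) :
    1 / 2 - gPsi x ≤ gd x * ((x ^ 2 + 2) / (x ^ 3 + 3 * x)) := by
  set F : ℝ → ℝ := fun s => 1 / 2 - gPsi s - gd s * ((s ^ 2 + 2) / (s ^ 3 + 3 * s)) with hF
  have hpos : ∀ s : ℝ, 0 < s → 0 < s ^ 3 + 3 * s := fun s hs => by positivity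
  have hd : ∀ s, 0 < s → HasDerivAt F (gd s * (6 / (s ^ 3 + 3 * s) ^ 2)) s := by
    intro s hs
    have h3 := (hpos s hs).ne'
    have h1 : HasDerivAt (fun s : ℝ => s ^ 2 + 2) (2 * s) s := by
      simpa using (hasDerivAt_pow 2 s).add_const (2 : ℝ)
    have h2 : HasDerivAt (fun s : ℝ => s ^ 3 + 3 * s) (3 * s ^ 2 + 3) s := by
      refine ((hasDerivAt_pow 3 s).add ((hasDerivAt_id s).const_mul 3)).congr_deriv ?_
      norm_num
    have h := ((gPsi_hasDerivAt s).const_sub (1 / 2)).sub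
      ((gd_hasDerivAt s).mul (h1.div h2 h3))
    refine h.congr_deriv ?_
    simp only [Pi.div_apply]
    field_simp
    ring
  have hmono : MonotoneOn F (Ioi 0) := by
    refine monotoneOn_of_deriv_nonneg (convex_Ioi 0)
      (fun s hs => (hd s hs).continuousAt.continuousWithinAt)
      (fun s hs => ?_) (fun s hs => ?_)
    · rw [interior_Ioi] at hs
      exact (hd s hs).differentiableAt.differentiableWithinAt
    · rw [interior_Ioi] at hs
      rw [(hd s hs).deriv]
      have := gd_pos s
      positivity
  have hlim : Tendsto (fun s => 1 / 2 - gPsi s) atTop (𝓝 0) := by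
    have h := gPsi_tendsto_atTop.const_sub (1 / 2)
    rwa [sub_self] at h
  have key : F x ≤ 0 := by
    refine ge_of_tendsto hlim ?_
    filter_upwards [eventually_ge_atTop x] with s hs
    have hs0 : 0 < s := hx.trans_le hs
    refine (hmono hx hs0 hs).trans ?_
    have := gd_pos s
    have : 0 ≤ gd s * ((s ^ 2 + 2) / (s ^ 3 + 3 * s)) := by positivity
    simp only [hF]; linarith
  simp only [hF] at key
  linarith

lemma sqrt_two_pi_bounds :
    2.506 ≤ Real.sqrt (2 * Real.pi) ∧ Real.sqrt (2 * Real.pi) ≤ 2.507 := by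
  constructor
  · apply Real.le_sqrt_of_sq_le
    nlinarith [Real.pi_gt_d4]
  · rw [Real.sqrt_le_left (by norm_num)]
    nlinarith [Real.pi_lt_d4]

/-- The scalar inequality on which the theorem rests: with `q` the Gaussian tail beyond `x`, it
says that `g - x K(x, ·)` has total mass at most `1 + x`. -/
lemma tail_ineq {x : ℝ} (hx : 0 ≤ x) :
    2 * x * (1 / 2 - gPsi x) * (1 / 2 + gPsi x) ≤ gd x * (x + 2 * (1 / 2 - gPsi x)) := by
  obtain ⟨hs1, hs2⟩ := sqrt_two_pi_bounds
  have hs0 : 0 < Real.sqrt (2 * Real.pi) := by linarith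
  have hgs : gd x * Real.sqrt (2 * Real.pi) = Real.exp (-(1 / 2) * x ^ 2) := by
    unfold gd; field_simp
  have hg0 := gd_pos x
  have hq0 : 0 ≤ 1 / 2 - gPsi x := by
    rw [← integral_Ioi_gd]
    exact integral_nonneg fun s => (gd_pos s).le
  have hpq : 1 / 2 + gPsi x = 1 - (1 / 2 - gPsi x) := by ring
  rw [hpq]
  have hmills := fun h : 0 < x => mills h
  generalize 1 / 2 - gPsi x = q at *
  generalize gd x = g at *
  generalize Real.sqrt (2 * Real.pi) = r at *
  rcases le_total x 0.8 with h8 | h8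
  · -- On `[0, 0.8]` one has `g ≥ 0.27`, and the quadratic in `q` is nonnegative.
    have h1 := Real.add_one_le_exp (-(1 / 2) * x ^ 2)
    have hgl : 0.27 ≤ g := by nlinarith
    have h2 : 0.27 * (x + 2 * q) ≤ g * (x + 2 * q) := by
      apply mul_le_mul_of_nonneg_right hgl; linarith
    refine le_trans ?_ h2
    have h3 : 0 ≤ 0.8 * 0.27 + 2 * q * 0.27 - 1.6 * q * (1 - q) := by
      nlinarith [sq_nonneg (q - 0.33)]
    have h4 := mul_nonneg hx h3
    have h5 := mul_nonneg hq0 (by linarith : 0 ≤ 0.8 - x)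
    nlinarith
  · -- For `x ≥ 0.8` the quadratic in `q` decreases on `[0, g U]`, so `q` may be replaced by `g U`.
    have hx0 : 0 < x := by linarith
    have hm := hmills hx0
    set U := (x ^ 2 + 2) / (x ^ 3 + 3 * x) with hU
    have hden : 0 < x ^ 3 + 3 * x := by positivity
    have hU0 : 0 < U := by positivity
    have hUe : U * (x ^ 3 + 3 * x) = x ^ 2 + 2 := by rw [hU]; field_simp
    have hgu : g ≤ 0.303 := by
      have h1 : Real.exp (-(1 / 2) * x ^ 2) ≤ 1 / 1.32 := by
        rw [show -(1 / 2) * x ^ 2 = -((1 / 2) * x ^ 2) by ring, Real.exp_neg, ← one_div]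
        apply one_div_le_one_div_of_le (by norm_num)
        have := Real.add_one_le_exp (1 / 2 * x ^ 2)
        nlinarith
      nlinarith
    have hA : g * (2 * x * U + 1) ≤ x := by
      have e : 2 * x * U + 1 = (3 * x ^ 2 + 7) / (x ^ 2 + 3) := by
        rw [hU]; field_simp; ring
      rw [e]
      have : (0 : ℝ) ≤ (3 * x ^ 2 + 7) / (x ^ 2 + 3) := by positivity
      refine (mul_le_mul_of_nonneg_right hgu this).trans ?_
      rw [← mul_div_assoc, div_le_iff₀ (by positivity)]
      nlinarith [mul_nonneg (sub_nonneg.2 h8) (sq_nonneg (x - 0.8)), sq_nonneg (x - 0.8)]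
    have hB : 2 * x * U ≤ x + 2 * g * U + 2 * x * g * U ^ 2 := by
      rcases le_total 1.7 x with h17 | h17
      · have : U ≤ 1 / 2 := by
          rw [hU, div_le_iff₀ hden]
          nlinarith [mul_nonneg (sub_nonneg.2 h17) (sq_nonneg x), mul_nonneg (sub_nonneg.2 h17) hx]
        have : 0 ≤ 2 * g * U + 2 * x * g * U ^ 2 := by positivity
        nlinarith
      · -- The tangent to `exp (-s)` at `s = 1/2` bounds `g` from below.
        have hgl : 0.6 * (1.5 - x ^ 2 / 2) ≤ g * 2.507 := by
          have h1 : Real.exp (-(1 / 2) * x ^ 2)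
              = Real.exp (-1 / 2) * Real.exp (1 / 2 - x ^ 2 / 2) := by
            rw [← Real.exp_add]; ring_nf
          have h2 := Real.add_one_le_exp (1 / 2 - x ^ 2 / 2)
          have h3 : 0.6 ≤ Real.exp (-1 / 2) := by
            have h4 : Real.exp (-1 / 2) ^ 2 = Real.exp (-1) := by
              rw [← Real.exp_nat_mul]; norm_num
            have h5 := Real.exp_neg_one_gt_d9
            have h6 := Real.exp_pos (-1 / 2)
            nlinarith
          have h7 : 0 ≤ 1.5 - x ^ 2 / 2 := by nlinarith
          have h8 : 0.6 * (1.5 - x ^ 2 / 2) ≤ Real.exp (-(1 / 2) * x ^ 2) := by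
            rw [h1]
            apply mul_le_mul h3 (by linarith) h7 (Real.exp_pos _).le
          nlinarith
        have hpoly : 2.507 * (x * (x ^ 2 + 3) * (2 * x ^ 2 + 4 - x ^ 3 - 3 * x))
            ≤ 0.6 * (1.5 - x ^ 2 / 2) * (2 * (x ^ 2 + 2) * (2 * x ^ 2 + 5)) := by
          nlinarith [sq_nonneg (x ^ 3 - 1.9 * x ^ 2), sq_nonneg (x ^ 2 - 1.2 * x),
            sq_nonneg (x - 1.2), sq_nonneg (x ^ 2 - 1.5)]
        have h9 : x * (x ^ 2 + 3) * (2 * x ^ 2 + 4 - x ^ 3 - 3 * x)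
            ≤ g * (2 * (x ^ 2 + 2) * (2 * x ^ 2 + 5)) := by
          have := mul_le_mul_of_nonneg_right hgl
            (by positivity : 0 ≤ 2 * (x ^ 2 + 2) * (2 * x ^ 2 + 5))
          nlinarith
        rw [hU, ← sub_nonneg]
        have e : x + 2 * g * ((x ^ 2 + 2) / (x ^ 3 + 3 * x))
            + 2 * x * g * ((x ^ 2 + 2) / (x ^ 3 + 3 * x)) ^ 2
            - 2 * x * ((x ^ 2 + 2) / (x ^ 3 + 3 * x))
            = (g * (2 * (x ^ 2 + 2) * (2 * x ^ 2 + 5))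
              - x * (x ^ 2 + 3) * (2 * x ^ 2 + 4 - x ^ 3 - 3 * x)) / (x * (x ^ 2 + 3) ^ 2) := by
          field_simp
          ring
        rw [e]
        apply div_nonneg (by linarith) (by positivity)
    have h1 : 0 ≤ (g * U - q) * (2 * (x - g) - 2 * x * (q + g * U)) := by
      apply mul_nonneg (by linarith)
      nlinarith
    have h2 := mul_le_mul_of_nonneg_left hB hg0.le
    nlinarith

/-- The tail inequality as a bound for the value at `x ≥ 0` of the kernel form of `S`: `a` and `b`
stand for the integrals of `φ g` over `(x, ∞)` and `(-∞, x]`. -/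
lemma alg_bound {x M a b : ℝ} (hx : 0 ≤ x) (hM : 0 ≤ M)
    (ha : |a| ≤ (1 / 2 - gPsi x) * M) (hb : |b| ≤ (1 / 2 + gPsi x) * M) :
    |a * (1 - x * (1 / 2 + gPsi x) / gd x) + b * (1 + x * (1 / 2 - gPsi x) / gd x)|
      ≤ (1 + x) * M := by
  have ht := tail_ineq hx
  have hg := gd_pos x
  have hq0 : 0 ≤ 1 / 2 - gPsi x := by
    rw [← integral_Ioi_gd]
    exact integral_nonneg fun s => (gd_pos s).le
  have hp0 : 0 ≤ 1 / 2 + gPsi x := by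
    rw [← integral_Iic_gd]
    exact integral_nonneg fun s => (gd_pos s).le
  have hsum : (1 / 2 - gPsi x) + (1 / 2 + gPsi x) = 1 := by ring
  generalize 1 / 2 - gPsi x = q at *
  generalize 1 / 2 + gPsi x = p at *
  generalize gd x = g at *
  have hc : 0 ≤ 1 + x * q / g := by positivity
  have h1 : |a * (1 - x * p / g) + b * (1 + x * q / g)|
      ≤ q * M * |1 - x * p / g| + p * M * (1 + x * q / g) := by
    refine (abs_add_le _ _).trans ?_
    rw [abs_mul, abs_mul, abs_of_nonneg hc]
    gcongr
  refine h1.trans ?_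
  have h2 : q * |1 - x * p / g| + p * (1 + x * q / g) ≤ 1 + x := by
    rcases le_total 0 (1 - x * p / g) with h | h
    · rw [abs_of_nonneg h]
      have : q * (1 - x * p / g) + p * (1 + x * q / g) = q + p := by ring
      linarith
    · rw [abs_of_nonpos h]
      have e : q * -(1 - x * p / g) + p * (1 + x * q / g) = p - q + 2 * x * q * p / g := by ring
      rw [e]
      have : 2 * x * q * p / g ≤ x + 2 * q := by
        rw [div_le_iff₀ hg]; linarith
      linarith
  have := mul_le_mul_of_nonneg_right h2 hM
  linarith

/-! ### The kernel of the double integral -/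

/-- The weight is integrable because it is the derivative of `-arcsin (e^{-t})`. -/
lemma weight_integrable :
    IntegrableOn (fun t : ℝ => Real.exp (-t) / Real.sqrt (1 - Real.exp (-2 * t))) (Ioi 0) := by
  refine integrableOn_Ioi_deriv_of_nonneg (g := fun t => -Real.arcsin (Real.exp (-t)))
    (l := -Real.arcsin 0) ?_ ?_ ?_ ?_
  · exact (by fun_prop : Continuous fun t : ℝ => -Real.arcsin (Real.exp (-t))).continuousWithinAt
  · intro t ht
    have h1 : Real.exp (-t) < 1 := by rw [Real.exp_lt_one_iff]; simpa using ht
    have h0 := Real.exp_pos (-t)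
    have h := ((Real.hasDerivAt_arcsin (by linarith) h1.ne).comp t (hasDerivAt_neg t).exp).neg
    refine h.congr_deriv ?_
    rw [show -2 * t = -t + -t by ring, Real.exp_add, ← sq]
    ring
  · intro t _; positivity
  · exact ((Real.continuous_arcsin.tendsto 0).comp
      (Real.tendsto_exp_neg_atTop_nhds_zero)).neg

/-- The integrand of `S` after the substitution `z = x e^{-t} + √(1 - e^{-2t}) y`, without the
factor `φ z`. -/
noncomputable def kern (x t z : ℝ) : ℝ :=
  (Real.exp (-t) / Real.sqrt (1 - Real.exp (-2 * t)))
    * ((z - x * Real.exp (-t)) / Real.sqrt (1 - Real.exp (-2 * t))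
      * gd ((z - x * Real.exp (-t)) / Real.sqrt (1 - Real.exp (-2 * t)))
      / Real.sqrt (1 - Real.exp (-2 * t)))

lemma sqrt_pos_aux {t : ℝ} (ht : 0 < t) : 0 < Real.sqrt (1 - Real.exp (-2 * t)) := by
  apply Real.sqrt_pos.2
  have : Real.exp (-2 * t) < 1 := by rw [Real.exp_lt_one_iff]; linarith
  linarith

lemma inner_subst (f : ℝ → ℝ) (a : ℝ) {c : ℝ} (hc : 0 < c) :
    ∫ z, f ((z - a) / c) / c = ∫ y, f y := by
  rw [integral_sub_right_eq_self (fun z => f (z / c) / c) a, integral_div,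
    Measure.integral_comp_div, abs_of_pos hc, smul_eq_mul]
  field_simp

lemma inner_eq (φ : ℝ → ℝ) (x : ℝ) {t : ℝ} (ht : 0 < t) :
    (Real.exp (-t) / Real.sqrt (1 - Real.exp (-2 * t)))
          * ∫ y, y * φ (x * Real.exp (-t) + Real.sqrt (1 - Real.exp (-2 * t)) * y) ∂gaussγ
      = ∫ z, φ z * kern x t z := by
  have hc := sqrt_pos_aux ht
  rw [integral_gaussγ, ← inner_subst _ (x * Real.exp (-t)) hc, ← integral_const_mul]
  refine integral_congr_ae (ae_of_all _ fun z => ?_)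
  simp only [kern]
  rw [mul_div_cancel₀ _ hc.ne', add_sub_cancel]
  ring

lemma kern_integrable (φ : ℝ → ℝ) (hcont : Continuous φ) {M : ℝ} (hM : ∀ y, |φ y| ≤ M) (x : ℝ) :
    Integrable (Function.uncurry fun t z => φ z * kern x t z)
      ((volume.restrict (Ioi (0 : ℝ))).prod volume) := by
  have hM0 : 0 ≤ M := (abs_nonneg _).trans (hM 0)
  have hgm : Measurable gd := gd_continuous.measurable
  have hφm : Measurable φ := hcont.measurable
  have hmeas : Measurable (Function.uncurry fun t z => φ z * kern x t z) := by
    unfold kern Function.uncurry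
    fun_prop
  have hsl : ∀ t : ℝ, 0 < t → Integrable (fun z => kern x t z) := by
    intro t ht
    have hc := sqrt_pos_aux ht
    unfold kern
    exact (((id_mul_gd_integrable.comp_div hc.ne').comp_sub_right (x * Real.exp (-t))).div_const
      _).const_mul _
  rw [integrable_prod_iff hmeas.aestronglyMeasurable]
  constructor
  · refine (ae_restrict_iff' measurableSet_Ioi).2 (ae_of_all _ fun t ht => ?_)
    exact (hsl t ht).bdd_mul hcont.aestronglyMeasurable (ae_of_all _ hM)
  · have hw := weight_integrable.mul_const (M * ∫ y, |y * gd y|)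
    refine Integrable.mono' hw hmeas.aestronglyMeasurable.norm.integral_prod_right' ?_
    refine (ae_restrict_iff' measurableSet_Ioi).2 (ae_of_all _ fun t ht => ?_)
    have hc := sqrt_pos_aux ht
    have hnn : 0 ≤ ∫ z, ‖Function.uncurry (fun t z => φ z * kern x t z) (t, z)‖ :=
      integral_nonneg fun z => norm_nonneg _
    rw [Real.norm_of_nonneg hnn]
    have h1 : ∫ z, ‖Function.uncurry (fun t z => φ z * kern x t z) (t, z)‖
        ≤ ∫ z, M * |kern x t z| := by
      refine integral_mono_of_nonneg (ae_of_all _ fun z => norm_nonneg _)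
        ((hsl t ht).abs.const_mul M) (ae_of_all _ fun z => ?_)
      simp only [Function.uncurry, Real.norm_eq_abs, abs_mul]
      exact mul_le_mul_of_nonneg_right (hM z) (abs_nonneg _)
    refine h1.trans_eq ?_
    rw [integral_const_mul, ← inner_subst (fun y => |y * gd y|) (x * Real.exp (-t)) hc]
    have h2 : ∀ z, |kern x t z| = (Real.exp (-t) / Real.sqrt (1 - Real.exp (-2 * t)))
        * (|(z - x * Real.exp (-t)) / Real.sqrt (1 - Real.exp (-2 * t))
      * gd ((z - x * Real.exp (-t)) / Real.sqrt (1 - Real.exp (-2 * t)))|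
      / Real.sqrt (1 - Real.exp (-2 * t))) := by
      intro z
      unfold kern
      rw [abs_mul, abs_div _ (Real.sqrt _), abs_of_pos hc, abs_of_nonneg (by positivity)]
      simp only [abs_div, abs_of_pos hc]
    simp_rw [h2]
    rw [integral_const_mul]
    ring

/-- The fundamental theorem of calculus on `(0, ∞)` with a limit at `0` in place of continuity. -/
lemma ftc_Ioi {F F' : ℝ → ℝ} {l m : ℝ} (hd : ∀ t, 0 < t → HasDerivAt F (F' t) t)
    (hi : IntegrableOn F' (Ioi 0)) (h0 : Tendsto F (𝓝[>] 0) (𝓝 l)) (h1 : Tendsto F atTop (𝓝 m)) :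
    ∫ t in Ioi 0, F' t = m - l := by
  have h := integral_Ioi_of_hasDerivAt_of_tendsto (a := 0) (f := Function.update F 0 l) (f' := F')
    (m := m) ?_ ?_ hi ?_
  · simpa using h
  · rw [continuousWithinAt_update_same, Ici_sdiff_left]
    exact h0
  · intro t ht
    refine (hd t ht).congr_of_eventuallyEq ?_
    filter_upwards [lt_mem_nhds ht] with s hs
    exact Function.update_of_ne hs.ne' _ _
  · refine h1.congr' ?_
    filter_upwards [eventually_gt_atTop 0] with s hs
    exact (Function.update_of_ne hs.ne' _ _).symm

/-- The integral of the kernel in `t`. With `w = (x - e^{-t} z) / √(1 - e^{-2t})` and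
`v = (z - e^{-t} x) / √(1 - e^{-2t})` one has `v² - w² = z² - x²`, which makes
`(g z / g x) Ψ(w)` an antiderivative. -/
lemma kern_integral {x z : ℝ} (hxz : z ≠ x) (hi : IntegrableOn (fun t => kern x t z) (Ioi 0)) :
    ∫ t in Ioi 0, kern x t z
      = gd z / gd x * (gPsi x + if x < z then 1 / 2 else -(1 / 2)) := by
  set w : ℝ → ℝ := fun t => (x - Real.exp (-t) * z) / Real.sqrt (1 - Real.exp (-2 * t)) with hw
  have hsq : ∀ t : ℝ, 0 < t → Real.sqrt (1 - Real.exp (-2 * t)) ^ 2 = 1 - Real.exp (-t) ^ 2 := by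
    intro t ht
    have : 0 ≤ 1 - Real.exp (-2 * t) := (Real.sqrt_pos.1 (sqrt_pos_aux ht)).le
    rw [Real.sq_sqrt this, ← Real.exp_nat_mul]
    push_cast; ring_nf
  have hd : ∀ t, 0 < t → HasDerivAt (fun t => gd z / gd x * gPsi (w t)) (kern x t z) t := by
    intro t ht
    have hc := sqrt_pos_aux ht
    have hc2 := hsq t ht
    have hpos := Real.sqrt_pos.1 hc
    have hn : HasDerivAt (fun t : ℝ => x - Real.exp (-t) * z) (Real.exp (-t) * z) t := by
      refine (((hasDerivAt_neg t).exp.mul_const z).const_sub x).congr_deriv ?_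
      ring
    have he : HasDerivAt (fun t : ℝ => 1 - Real.exp (-2 * t)) (2 * Real.exp (-t) ^ 2) t := by
      refine ((((hasDerivAt_id t).const_mul (-2)).exp).const_sub 1).congr_deriv ?_
      rw [← Real.exp_nat_mul]
      simp only [id, mul_one]
      push_cast; ring_nf
    have hwd := hn.div (he.sqrt hpos.ne') hc.ne'
    have h := ((gPsi_hasDerivAt (w t)).comp t hwd).const_mul (gd z / gd x)
    refine h.congr_deriv ?_
    have hgw : gd z * gd (w t)
        = gd x * gd ((z - x * Real.exp (-t)) / Real.sqrt (1 - Real.exp (-2 * t))) := by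
      simp only [gd, hw]
      have : ∀ a b k : ℝ, k * Real.exp a * (k * Real.exp b) = k * k * Real.exp (a + b) := by
        intro a b k; rw [Real.exp_add]; ring
      rw [this, this]
      congr 2
      rw [div_pow, div_pow, hc2]
      have : 1 - Real.exp (-t) ^ 2 ≠ 0 := by rw [← hc2]; positivity
      field_simp
      ring
    have hgx := (gd_pos x).ne'
    unfold kern
    have hgw' : gd z / gd x * gd (w t)
        = gd ((z - x * Real.exp (-t)) / Real.sqrt (1 - Real.exp (-2 * t))) := by
      rw [div_mul_eq_mul_div, hgw, mul_div_cancel_left₀ _ hgx]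
    rw [← mul_assoc, hgw']
    generalize gd ((z - x * Real.exp (-t)) / Real.sqrt (1 - Real.exp (-2 * t))) = G
    generalize Real.sqrt (1 - Real.exp (-2 * t)) = c at *
    generalize Real.exp (-t) = u at *
    field_simp
    rw [hc2]
    ring
  have htop : Tendsto w atTop (𝓝 x) := by
    have hE := Real.tendsto_exp_neg_atTop_nhds_zero
    have hE2 : Tendsto (fun t : ℝ => Real.exp (-2 * t)) atTop (𝓝 0) :=
      Real.tendsto_exp_atBot.comp (tendsto_id.const_mul_atTop_of_neg (by norm_num))
    have h := ((hE.mul_const z).const_sub x).div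
      ((Real.continuous_sqrt.tendsto _).comp (hE2.const_sub 1)) (by simp)
    simp only [zero_mul, sub_zero, Real.sqrt_one, div_one] at h
    exact h
  have hnum : Tendsto (fun t : ℝ => x - Real.exp (-t) * z) (𝓝[>] 0) (𝓝 (x - z)) := by
    have : Continuous fun t : ℝ => x - Real.exp (-t) * z := by fun_prop
    simpa using (this.tendsto 0).mono_left nhdsWithin_le_nhds
  have hden : Tendsto (fun t : ℝ => (Real.sqrt (1 - Real.exp (-2 * t)))⁻¹) (𝓝[>] 0) atTop := by
    apply Tendsto.inv_tendsto_nhdsGT_zero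
    rw [tendsto_nhdsWithin_iff]
    constructor
    · have : Continuous fun t : ℝ => Real.sqrt (1 - Real.exp (-2 * t)) := by fun_prop
      simpa using (this.tendsto 0).mono_left nhdsWithin_le_nhds
    · filter_upwards [self_mem_nhdsWithin] with t ht using sqrt_pos_aux ht
  have hpsix := ((gPsi_hasDerivAt x).continuousAt.tendsto.comp htop).const_mul (gd z / gd x)
  rcases lt_or_gt_of_ne hxz with h | h
  · have h0 : Tendsto w (𝓝[>] 0) atTop := hnum.pos_mul_atTop (by linarith) hden
    rw [ftc_Ioi hd hi ((gPsi_tendsto_atTop.comp h0).const_mul _) hpsix, if_neg h.not_gt]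
    ring
  · have h0 : Tendsto w (𝓝[>] 0) atBot := hnum.neg_mul_atTop (by linarith) hden
    rw [ftc_Ioi hd hi ((gPsi_tendsto_atBot.comp h0).const_mul _) hpsix, if_pos h]
    ring

/-- The double integral in the definition of `S`, evaluated by exchanging the order of
integration. -/
lemma double_integral (φ : ℝ → ℝ) (hcont : Continuous φ) {M : ℝ} (hM : ∀ y, |φ y| ≤ M) (x : ℝ) :
    ∫ t in Ioi (0 : ℝ), (Real.exp (-t) / Real.sqrt (1 - Real.exp (-2 * t)))
          * ∫ y, y * φ (x * Real.exp (-t) + Real.sqrt (1 - Real.exp (-2 * t)) * y) ∂gaussγ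
      = (∫ z in Ioi x, gd z * φ z) * ((1 / 2 + gPsi x) / gd x)
        - (∫ z in Iic x, gd z * φ z) * ((1 / 2 - gPsi x) / gd x) := by
  rw [setIntegral_congr_fun measurableSet_Ioi (fun t ht => inner_eq φ x ht),
    integral_integral_swap (kern_integrable φ hcont hM x)]
  have hone := (kern_integrable (fun _ => 1) continuous_const (M := 1) (by simp) x).prod_left_ae
  have hne : ∀ᵐ z : ℝ, z ≠ x := by simp [ae_iff]
  have hgφ : Integrable fun z => gd z * φ z := by
    simpa [mul_comm] using
      gd_integrable.bdd_mul hcont.aestronglyMeasurable (ae_of_all _ hM)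
  have hK : (fun z => ∫ t in Ioi 0, φ z * kern x t z) =ᵐ[volume]
      fun z => (gd z * φ z) * ((gPsi x + if x < z then 1 / 2 else -(1 / 2)) / gd x) := by
    filter_upwards [hone, hne] with z hz hzx
    have hz' : IntegrableOn (fun t => kern x t z) (Ioi 0) := by
      simpa [Function.uncurry, IntegrableOn] using hz
    rw [integral_const_mul, kern_integral hzx hz']
    ring
  have hI1 : ∀ z ∈ Ioi x,
      (gd z * φ z) * ((gPsi x + if x < z then 1 / 2 else -(1 / 2)) / gd x)
        = (gd z * φ z) * ((1 / 2 + gPsi x) / gd x) := by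
    intro z hz
    rw [if_pos (show x < z from hz)]; ring
  have hI2 : ∀ z ∈ Iic x,
      (gd z * φ z) * ((gPsi x + if x < z then 1 / 2 else -(1 / 2)) / gd x)
        = (gd z * φ z) * (-((1 / 2 - gPsi x) / gd x)) := by
    intro z hz
    rw [if_neg (not_lt.2 hz)]; ring
  rw [integral_congr_ae hK]
  have hs := intervalIntegral.integral_Iic_add_Ioi (b := x) (μ := volume)
    (f := fun z => (gd z * φ z) * ((gPsi x + if x < z then 1 / 2 else -(1 / 2)) / gd x))
    (((hgφ.mul_const _).integrableOn).congr_fun (fun z hz => (hI2 z hz).symm) measurableSet_Iic)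
    (((hgφ.mul_const _).integrableOn).congr_fun (fun z hz => (hI1 z hz).symm) measurableSet_Ioi)
  rw [← hs, setIntegral_congr_fun measurableSet_Iic hI2,
    setIntegral_congr_fun measurableSet_Ioi hI1, integral_mul_const, integral_mul_const]
  ring

/-! ### The estimate -/

lemma set_bound (φ : ℝ → ℝ) {M : ℝ} (hM : ∀ y, |φ y| ≤ M) (s : Set ℝ) :
    |∫ z in s, gd z * φ z| ≤ (∫ z in s, gd z) * M := by
  rw [← integral_mul_const, ← Real.norm_eq_abs]
  refine norm_integral_le_of_norm_le (gd_integrable.integrableOn.mul_const M)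
    (ae_of_all _ fun z => ?_)
  rw [Real.norm_eq_abs, abs_mul, abs_of_pos (gd_pos z)]
  exact mul_le_mul_of_nonneg_left (hM z) (gd_pos z).le

end Gauss

/-- For continuous bounded `φ`, `|S(φ)(x)| ≤ (2 + |x|) ⋅ sup_y |φ(y)|`. -/
theorem stmt_14 (φ : ℝ → ℝ) (hcont : Continuous φ) (hbdd : ∃ B : ℝ, ∀ y : ℝ, |φ y| ≤ B) :
    ∀ x : ℝ, |Sop φ x| ≤ (2 + |x|) * ⨆ y : ℝ, |φ y| := by
  intro x
  obtain ⟨B, hB⟩ := hbdd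
  have hM : ∀ y, |φ y| ≤ ⨆ y : ℝ, |φ y| :=
    le_ciSup (f := fun y => |φ y|) ⟨B, by rintro _ ⟨y, rfl⟩; exact hB y⟩
  generalize (⨆ y : ℝ, |φ y|) = M at *
  have hM0 : 0 ≤ M := (abs_nonneg _).trans (hM 0)
  have hgφ : Integrable fun z => gd z * φ z := by
    simpa [mul_comm] using
      gd_integrable.bdd_mul hcont.aestronglyMeasurable (ae_of_all _ hM)
  have ha := set_bound φ hM (Set.Ioi x)
  have hb := set_bound φ hM (Set.Iic x)
  rw [integral_Ioi_gd] at ha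
  rw [integral_Iic_gd] at hb
  unfold Sop
  rw [double_integral φ hcont hM x, integral_gaussγ,
    ← intervalIntegral.integral_Iic_add_Ioi (b := x) hgφ.integrableOn hgφ.integrableOn]
  generalize (∫ z in Set.Ioi x, gd z * φ z) = a at *
  generalize (∫ z in Set.Iic x, gd z * φ z) = b at *
  have key : |a * (1 - x * (1 / 2 + gPsi x) / gd x) + b * (1 + x * (1 / 2 - gPsi x) / gd x)|
      ≤ (1 + |x|) * M := by
    rcases le_total 0 x with h | h
    · rw [abs_of_nonneg h]
      exact alg_bound h hM0 ha hb
    · -- Reflection: `x ↦ -x` exchanges the two tails, hence the roles of `a` and `b`.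
      rw [abs_of_nonpos h]
      have hr := alg_bound (x := -x) (a := b) (b := a) (by linarith) hM0
        (by rw [gPsi_neg]; simpa using hb) (by rw [gPsi_neg]; simpa [sub_eq_add_neg] using ha)
      rw [gPsi_neg, gd_neg] at hr
      convert hr using 2
      ring
  have e : b + a - φ x - x * (a * ((1 / 2 + gPsi x) / gd x) - b * ((1 / 2 - gPsi x) / gd x))
      = (a * (1 - x * (1 / 2 + gPsi x) / gd x) + b * (1 + x * (1 / 2 - gPsi x) / gd x)) - φ x := by
    ring
  rw [e]
  refine (abs_sub _ _).trans ?_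
  linarith [hM x]
end

section
/- Let C > 0, d ∈ ℕ, and let φ : ℝ → ℝ be continuous with |φ(x)| ≤ C(1+|x|^d) for all x. Then there exists a constant M > 0, depending only on d, such that |S(φ)(x)| ≤ C · M · (1+|x|^{d+1}) for all x ∈ ℝ; moreover, S(φ) is continuous on ℝ. -/
/-!
The kernel `k t = e^{-t} / √(1 - e^{-2t})` is the derivative of `-arcsin (e^{-t})`, hence is
nonnegative and integrable on `(0, ∞)`. As `e^{-t}` and `√(1 - e^{-2t})` lie in `[0, 1]`, the
growth condition and the inequality `1 + (a + b)^d ≤ 2^d (1 + a^d) (1 + b^d)` bound the integrand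
of the inner Gaussian integral by `C 2^d (1 + |x|^d) · |y| (1 + |y|^d)`, whose `y`-part has a finite
Gaussian integral. Integrating against `k` gives the growth bound (`abs_outer_le`), and the same
dominating functions, uniform for `x` in bounded sets, give continuity by dominated convergence,
first of the inner integral jointly in `(x, t)`, `t > 0` (`continuousAt_inner`), then of the outer
one (`continuous_outer`).
-/

open MeasureTheory ProbabilityTheory

/-- The singular weight of the outer integral in `Sop`. -/
noncomputable def ker (t : ℝ) : ℝ := Real.exp (-t) / Real.sqrt (1 - Real.exp (-2 * t))

/-- The inner Gaussian integral in `Sop`. -/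
noncomputable def inn (φ : ℝ → ℝ) (x t : ℝ) : ℝ :=
  ∫ y, y * φ (x * Real.exp (-t) + Real.sqrt (1 - Real.exp (-2 * t)) * y) ∂gaussγ

lemma ker_nonneg (t : ℝ) : 0 ≤ ker t := by unfold ker; positivity

lemma ker_integrableOn : IntegrableOn ker (Set.Ioi 0) := by
  have hder : ∀ t ∈ Set.Ioi (0 : ℝ),
      HasDerivAt (fun t => -Real.arcsin (Real.exp (-t))) (ker t) t := by
    intro t ht
    have h1 : Real.exp (-t) < 1 := by
      rw [Real.exp_lt_one_iff]; exact neg_lt_zero.mpr ht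
    have h0 := Real.exp_pos (-t)
    have h2 : HasDerivAt (fun t : ℝ => Real.exp (-t)) (Real.exp (-t) * (-1)) t :=
      (hasDerivAt_neg t).exp
    have h3 := ((Real.hasDerivAt_arcsin (x := Real.exp (-t)) (by linarith) h1.ne).comp t h2).neg
    have he : Real.exp (-2 * t) = Real.exp (-t) ^ 2 := by
      rw [← Real.exp_nat_mul]; congr 1; push_cast; ring
    refine h3.congr_deriv ?_
    simp only [ker, he]
    ring
  refine integrableOn_Ioi_deriv_of_nonneg (l := -Real.arcsin 0) ?_ hder
    (fun t _ => ker_nonneg t) ?_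
  · exact (Real.continuous_arcsin.comp (Real.continuous_exp.comp continuous_neg)).neg
      |>.continuousWithinAt
  · exact ((Real.continuous_arcsin.tendsto 0).comp
      (Real.tendsto_exp_neg_atTop_nhds_zero)).neg

lemma integrable_abs_pow (n : ℕ) : Integrable (fun y : ℝ => |y| ^ n) gaussγ := by
  have h : MemLp id (n : ENNReal) gaussγ := by
    simpa [gaussγ] using memLp_id_gaussianReal (μ := 0) (v := 1) (n : NNReal)
  have : IsProbabilityMeasure gaussγ := by unfold gaussγ; infer_instance
  simpa using h.integrable_norm_pow'

lemma integrable_weight (d : ℕ) :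
    Integrable (fun y : ℝ => |y| * (1 + |y| ^ d)) gaussγ := by
  have := (integrable_abs_pow 1).add (integrable_abs_pow (d + 1))
  refine this.congr (Filter.Eventually.of_forall fun y => ?_)
  simp only [Pi.add_apply]
  ring

lemma one_add_add_pow_le (d : ℕ) {a b : ℝ} (ha : 0 ≤ a) (hb : 0 ≤ b) :
    1 + (a + b) ^ d ≤ 2 ^ d * ((1 + a ^ d) * (1 + b ^ d)) := by
  have h1 : (1 : ℝ) ≤ 2 ^ d := one_le_pow₀ (by norm_num)
  have h2 : (a + b) ^ d ≤ 2 ^ d * (a ^ d + b ^ d) := by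
    rcases le_total a b with h | h
    · calc (a + b) ^ d ≤ (2 * b) ^ d := by gcongr; linarith
        _ = 2 ^ d * b ^ d := mul_pow _ _ _
        _ ≤ _ := by gcongr; linarith [pow_nonneg ha d]
    · calc (a + b) ^ d ≤ (2 * a) ^ d := by gcongr; linarith
        _ = 2 ^ d * a ^ d := mul_pow _ _ _
        _ ≤ _ := by gcongr; linarith [pow_nonneg hb d]
  have h3 : 0 ≤ (2 : ℝ) ^ d * (a ^ d * b ^ d) := by positivity
  nlinarith

section
variable {φ : ℝ → ℝ} {C : ℝ} {d : ℕ}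

/-- The dominating function for the inner integral, uniform in `t` and in `|x| ≤ R`. -/
lemma abs_integrand_le (hC : 0 < C) (hb : ∀ x : ℝ, |φ x| ≤ C * (1 + |x| ^ d))
    {x R t : ℝ} (hx : |x| ≤ R) (ht : 0 ≤ t) (y : ℝ) :
    |y * φ (x * Real.exp (-t) + Real.sqrt (1 - Real.exp (-2 * t)) * y)|
      ≤ C * 2 ^ d * (1 + R ^ d) * (|y| * (1 + |y| ^ d)) := by
  have he : Real.exp (-t) ≤ 1 := by rw [Real.exp_le_one_iff]; linarith
  have hs : Real.sqrt (1 - Real.exp (-2 * t)) ≤ 1 := by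
    rw [Real.sqrt_le_one]; linarith [Real.exp_pos (-2 * t)]
  have hR : 0 ≤ R := (abs_nonneg x).trans hx
  have h1 : |x * Real.exp (-t) + Real.sqrt (1 - Real.exp (-2 * t)) * y| ≤ R + |y| := by
    refine (abs_add_le _ _).trans ?_
    rw [abs_mul, abs_mul, abs_of_pos (Real.exp_pos _), abs_of_nonneg (Real.sqrt_nonneg _)]
    have := abs_nonneg x
    have := abs_nonneg y
    have := mul_le_mul_of_nonneg_left he (abs_nonneg x)
    have := mul_le_mul_of_nonneg_right hs (abs_nonneg y)
    linarith
  rw [abs_mul]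
  calc |y| * |φ (x * Real.exp (-t) + Real.sqrt (1 - Real.exp (-2 * t)) * y)|
      ≤ |y| * (C * (1 + (R + |y|) ^ d)) := by
        refine mul_le_mul_of_nonneg_left ((hb _).trans ?_) (abs_nonneg y)
        gcongr
    _ ≤ |y| * (C * (2 ^ d * ((1 + R ^ d) * (1 + |y| ^ d)))) := by
        gcongr
        exact one_add_add_pow_le d hR (abs_nonneg y)
    _ = _ := by ring

lemma abs_inner_le (hC : 0 < C) (hb : ∀ x : ℝ, |φ x| ≤ C * (1 + |x| ^ d))
    {x R t : ℝ} (hx : |x| ≤ R) (ht : 0 ≤ t) :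
    |inn φ x t| ≤ C * 2 ^ d * (1 + R ^ d) * ∫ y, |y| * (1 + |y| ^ d) ∂gaussγ := by
  rw [← integral_const_mul, ← Real.norm_eq_abs (inn φ x t), inn]
  exact norm_integral_le_of_norm_le ((integrable_weight d).const_mul _)
    (Filter.Eventually.of_forall fun y => abs_integrand_le hC hb hx ht y)

lemma continuousAt_inner (hC : 0 < C) (hφ : Continuous φ)
    (hb : ∀ x : ℝ, |φ x| ≤ C * (1 + |x| ^ d)) {x t : ℝ} (ht : 0 < t) :
    ContinuousAt (fun p : ℝ × ℝ => inn φ p.1 p.2) (x, t) := by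
  unfold inn
  refine continuousAt_of_dominated
    (bound := fun y => C * 2 ^ d * (1 + (|x| + 1) ^ d) * (|y| * (1 + |y| ^ d))) ?_ ?_
    ((integrable_weight d).const_mul _) ?_
  · refine Filter.Eventually.of_forall fun p => Continuous.aestronglyMeasurable ?_
    fun_prop
  · have h1 : ∀ᶠ p : ℝ × ℝ in nhds (x, t), |p.1| < |x| + 1 :=
      (continuous_fst.abs.continuousAt (x := (x, t))).eventually_lt continuousAt_const (by simp)
    have h2 : ∀ᶠ p : ℝ × ℝ in nhds (x, t), 0 < p.2 :=
      continuousAt_const.eventually_lt (continuous_snd.continuousAt (x := (x, t))) ht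
    filter_upwards [h1, h2] with p hp1 hp2
    exact Filter.Eventually.of_forall fun y => abs_integrand_le hC hb hp1.le hp2.le y
  · refine Filter.Eventually.of_forall fun y => Continuous.continuousAt ?_
    fun_prop

lemma continuous_outer (hC : 0 < C) (hφ : Continuous φ)
    (hb : ∀ x : ℝ, |φ x| ≤ C * (1 + |x| ^ d)) :
    Continuous fun x => ∫ t in Set.Ioi (0 : ℝ), ker t * inn φ x t := by
  rw [continuous_iff_continuousAt]
  intro x
  refine continuousAt_of_dominated
    (bound := fun t => ker t * (C * 2 ^ d * (1 + (|x| + 1) ^ d) *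
      ∫ y, |y| * (1 + |y| ^ d) ∂gaussγ)) ?_ ?_ (ker_integrableOn.mul_const _) ?_
  · refine Filter.Eventually.of_forall fun z => ?_
    refine ker_integrableOn.aestronglyMeasurable.mul
      (ContinuousOn.aestronglyMeasurable (fun t ht => ?_) measurableSet_Ioi)
    exact (ContinuousAt.comp (f := fun t : ℝ => (z, t)) (continuousAt_inner hC hφ hb ht)
      (by fun_prop)).continuousWithinAt
  · have h1 : ∀ᶠ z : ℝ in nhds x, |z| < |x| + 1 :=
      continuous_abs.continuousAt.eventually_lt continuousAt_const (by simp)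
    filter_upwards [h1] with z hz
    filter_upwards [ae_restrict_mem measurableSet_Ioi] with t ht
    rw [Real.norm_eq_abs, abs_mul, abs_of_nonneg (ker_nonneg t)]
    exact mul_le_mul_of_nonneg_left (abs_inner_le hC hb hz.le (le_of_lt ht)) (ker_nonneg t)
  · filter_upwards [ae_restrict_mem measurableSet_Ioi] with t ht
    exact continuousAt_const.mul (ContinuousAt.comp (f := fun z : ℝ => (z, t))
      (continuousAt_inner hC hφ hb ht) (by fun_prop))

lemma abs_outer_le (hC : 0 < C) (hb : ∀ x : ℝ, |φ x| ≤ C * (1 + |x| ^ d)) (x : ℝ) :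
    |∫ t in Set.Ioi (0 : ℝ), ker t * inn φ x t| ≤
      (∫ t in Set.Ioi (0 : ℝ), ker t) *
        (C * 2 ^ d * (1 + |x| ^ d) * ∫ y, |y| * (1 + |y| ^ d) ∂gaussγ) := by
  rw [← integral_mul_const, ← Real.norm_eq_abs (∫ _ in _, _)]
  refine norm_integral_le_of_norm_le (ker_integrableOn.mul_const _) ?_
  filter_upwards [ae_restrict_mem measurableSet_Ioi] with t ht
  rw [Real.norm_eq_abs, abs_mul, abs_of_nonneg (ker_nonneg t)]
  exact mul_le_mul_of_nonneg_left (abs_inner_le hC hb le_rfl (le_of_lt ht)) (ker_nonneg t)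

end

/-- For each `d` there is `M > 0`, depending only on `d`, such that for every continuous
`φ` with `|φ(x)| ≤ C(1+|x|^d)` one has `|S(φ)(x)| ≤ C M (1+|x|^{d+1})`; moreover `S(φ)`
is continuous. -/
theorem stmt_15 (d : ℕ) :
    ∃ M : ℝ, 0 < M ∧ ∀ (C : ℝ), 0 < C → ∀ φ : ℝ → ℝ, Continuous φ →
      (∀ x : ℝ, |φ x| ≤ C * (1 + |x| ^ d)) →
      (∀ x : ℝ, |Sop φ x| ≤ C * M * (1 + |x| ^ (d + 1))) ∧ Continuous (Sop φ) := by
  have : IsProbabilityMeasure gaussγ := by unfold gaussγ; infer_instance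
  set A : ℝ := ∫ y, (1 + |y| ^ d) ∂gaussγ with hA
  set K : ℝ := ∫ y, |y| * (1 + |y| ^ d) ∂gaussγ with hK
  set I : ℝ := ∫ t in Set.Ioi (0 : ℝ), ker t with hI
  have hA0 : 0 ≤ A := integral_nonneg fun y => by positivity
  have hK0 : 0 ≤ K := integral_nonneg fun y => by positivity
  have hI0 : 0 ≤ I := integral_nonneg fun t => ker_nonneg t
  refine ⟨A + 2 + 2 * (I * 2 ^ d * K), by positivity, fun C hC φ hφ hb => ⟨fun x => ?_, ?_⟩⟩
  · have hS : Sop φ x = (∫ y, φ y ∂gaussγ) - φ x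
        - x * ∫ t in Set.Ioi (0 : ℝ), ker t * inn φ x t := rfl
    have h1 : |∫ y, φ y ∂gaussγ| ≤ C * A := by
      rw [hA, ← integral_const_mul, ← Real.norm_eq_abs]
      exact norm_integral_le_of_norm_le
        (((integrable_const 1).add (integrable_abs_pow d)).const_mul C)
        (Filter.Eventually.of_forall fun y => hb y)
    have h2 := hb x
    have h3 := mul_le_mul_of_nonneg_left (abs_outer_le hC hb x) (abs_nonneg x)
    rw [← abs_mul, ← hI, ← hK] at h3
    have hx := abs_nonneg x
    have hX : 0 ≤ |x| ^ (d + 1) := by positivity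
    have hp : ∀ n ≤ d + 1, |x| ^ n ≤ 1 + |x| ^ (d + 1) := by
      intro n hn
      rcases le_total |x| 1 with h | h
      · linarith [pow_le_one₀ (n := n) hx h]
      · linarith [pow_le_pow_right₀ h hn]
    have h4 := hp d (by omega)
    have h5 := hp 1 (by omega)
    rw [pow_one] at h5
    have e1 : C * A ≤ C * A * (1 + |x| ^ (d + 1)) :=
      le_mul_of_one_le_right (by positivity) (by linarith)
    have e2 : C * (1 + |x| ^ d) ≤ C * (2 * (1 + |x| ^ (d + 1))) := by
      gcongr; linarith
    have e3 : |x| * (I * (C * 2 ^ d * (1 + |x| ^ d) * K)) ≤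
        C * (I * 2 ^ d * K) * (2 * (1 + |x| ^ (d + 1))) := by
      have : |x| * (I * (C * 2 ^ d * (1 + |x| ^ d) * K)) =
        C * (I * 2 ^ d * K) * (|x| + |x| ^ (d + 1)) := by ring
      rw [this]
      gcongr; linarith
    rw [hS]
    have t1 := abs_sub ((∫ y, φ y ∂gaussγ) - φ x)
      (x * ∫ t in Set.Ioi (0 : ℝ), ker t * inn φ x t)
    have t2 := abs_sub (∫ y, φ y ∂gaussγ) (φ x)
    have e4 : C * (A + 2 + 2 * (I * 2 ^ d * K)) * (1 + |x| ^ (d + 1)) =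
        C * A * (1 + |x| ^ (d + 1)) + C * (2 * (1 + |x| ^ (d + 1)))
          + C * (I * 2 ^ d * K) * (2 * (1 + |x| ^ (d + 1))) := by ring
    rw [e4]
    linarith
  · exact (continuous_const.sub hφ).sub (continuous_id.mul (continuous_outer hC hφ hb))
end

section
/- Let M, d ∈ ℕ and let Q : ℝ^M → ℝ be a polynomial function of total degree at most d. Then applying successively the operators f ↦ L f + j·f for j = d, d-1, …, 1, 0 to Q yields the identically zero function; that is, (L ∘ (L + Id) ∘ ⋯ ∘ (L + d·Id)) Q = 0. -/
/-!
On polynomials the Ornstein–Uhlenbeck operator is `p ↦ ∑ ∂ᵢ²p - ∑ Xᵢ ∂ᵢp`. By Euler's identity the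
second sum multiplies a monomial of degree `n` by `n`, while the first lowers its degree by two.
Hence `L + n` maps polynomials whose monomials all have degree `< n + 1` to polynomials whose
monomials all have degree `< n` (`polyOU_add_mem`). Applying this for `n = d, d - 1, …, 0` leaves
a polynomial without monomials, which is zero.
-/

open MeasureTheory

/-- The Ornstein–Uhlenbeck operator on functions `ℝ^M → ℝ`:
`L f(x) = Δf(x) - ⟨x, ∇f(x)⟩`, written via partial derivatives along coordinates. -/
noncomputable def LOU {M : ℕ} (f : (Fin M → ℝ) → ℝ) (x : Fin M → ℝ) : ℝ :=
  (∑ i, iteratedDeriv 2 (fun u => f (Function.update x i u)) (x i))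
    - ∑ i, x i * deriv (fun u => f (Function.update x i u)) (x i)

/-- `opChain M d Q k` is the result of applying the operators `L + d·Id`, `L + (d-1)·Id`,
…, (`k` of them, starting with `L + d·Id`) successively to `Q`.  In particular
`opChain M d Q (d+1) = (L ∘ (L + Id) ∘ ⋯ ∘ (L + d·Id)) Q`. -/
noncomputable def opChain (M d : ℕ) (Q : (Fin M → ℝ) → ℝ) : ℕ → ((Fin M → ℝ) → ℝ)
  | 0 => Q
  | k + 1 => fun x => LOU (opChain M d Q k) x + ((d - k : ℕ) : ℝ) * opChain M d Q k x

/-- The Ornstein–Uhlenbeck operator on polynomials, with formal partial derivatives. -/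
noncomputable def polyOU {M : ℕ} : MvPolynomial (Fin M) ℝ →ₗ[ℝ] MvPolynomial (Fin M) ℝ where
  toFun p := ∑ i, MvPolynomial.pderiv i (MvPolynomial.pderiv i p)
    - ∑ i, MvPolynomial.X i * MvPolynomial.pderiv i p
  map_add' p q := by
    simp only [map_add, mul_add, Finset.sum_add_distrib]
    ring
  map_smul' c p := by
    simp only [Derivation.map_smul, mul_smul_comm, ← Finset.smul_sum, smul_sub, RingHom.id_apply]

/-- The formal partial derivative computes the derivative along a coordinate line. -/
lemma hasDerivAt_eval_update {M : ℕ} (p : MvPolynomial (Fin M) ℝ) (x : Fin M → ℝ) (i : Fin M)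
    (t : ℝ) :
    HasDerivAt (fun u => MvPolynomial.eval (Function.update x i u) p)
      (MvPolynomial.eval (Function.update x i t) (MvPolynomial.pderiv i p)) t := by
  induction p using MvPolynomial.induction_on with
  | C a => simpa using hasDerivAt_const t a
  | add p q hp hq =>
    simp only [map_add]
    exact hp.add hq
  | mul_X p j hp =>
    have hX : HasDerivAt (fun u => Function.update x i u j) ((Pi.single i 1 : Fin M → ℝ) j) t :=
      hasDerivAt_pi.1 (hasDerivAt_update x i t) j
    have h := hp.mul hX
    have hs : MvPolynomial.eval (Function.update x i t)
        ((Pi.single i 1 : Fin M → MvPolynomial (Fin M) ℝ) j) = (Pi.single i 1 : Fin M → ℝ) j := by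
      by_cases hij : j = i
      · subst hij; simp
      · simp [hij]
    simp only [Derivation.leibniz, smul_eq_mul, MvPolynomial.pderiv_X, map_add, map_mul,
      MvPolynomial.eval_X, hs]
    rw [add_comm, mul_comm (Function.update x i t j)]
    exact h

lemma LOU_eval {M : ℕ} (p : MvPolynomial (Fin M) ℝ) :
    LOU (fun x => MvPolynomial.eval x p) = fun x => MvPolynomial.eval x (polyOU p) := by
  funext x
  have hd : ∀ (q : MvPolynomial (Fin M) ℝ) (i : Fin M),
      deriv (fun u => MvPolynomial.eval (Function.update x i u) q) =
        fun t => MvPolynomial.eval (Function.update x i t) (MvPolynomial.pderiv i q) :=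
    fun q i => funext fun t => (hasDerivAt_eval_update q x i t).deriv
  simp [LOU, polyOU, iteratedDeriv_succ, iteratedDeriv_zero, hd]

/-- Since `∑ Xᵢ ∂ᵢ` multiplies degree-`n` monomials by `n`, the operator `L + n` cancels the part of
degree `n`. Strict bounds on the degrees make the case `n = 0` uniform with the others. -/
lemma polyOU_add_mem {M : ℕ} (n : ℕ) (p : MvPolynomial (Fin M) ℝ)
    (hp : p ∈ MvPolynomial.restrictSupport ℝ {m : Fin M →₀ ℕ | m.degree < n + 1}) :
    polyOU p + (n : ℝ) • p ∈ MvPolynomial.restrictSupport ℝ {m : Fin M →₀ ℕ | m.degree < n} := by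
  rw [MvPolynomial.restrictSupport_eq_span] at hp
  induction hp using Submodule.span_induction with
  | zero => simp
  | add p q _ _ hp hq =>
    rw [map_add, smul_add, add_add_add_comm]
    exact add_mem hp hq
  | smul c p _ hp =>
    rw [map_smul, smul_comm, ← smul_add]
    exact Submodule.smul_mem _ c hp
  | mem p hp =>
    obtain ⟨m, hm, rfl⟩ := hp
    have hm' : m.degree < n + 1 := hm
    have heuler := (MvPolynomial.isHomogeneous_monomial (R := ℝ) 1
      (rfl : m.degree = m.degree)).sum_X_mul_pderiv
    have hsplit : polyOU (MvPolynomial.monomial m (1 : ℝ)) + (n : ℝ) • MvPolynomial.monomial m 1 =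
        ∑ i, MvPolynomial.pderiv i (MvPolynomial.pderiv i (MvPolynomial.monomial m (1 : ℝ))) +
          MvPolynomial.monomial m ((n : ℝ) - m.degree) := by
      simp only [polyOU, LinearMap.coe_mk, AddHom.coe_mk]
      rw [heuler, map_sub, ← Nat.cast_smul_eq_nsmul ℝ, MvPolynomial.smul_monomial,
        MvPolynomial.smul_monomial]
      simp only [smul_eq_mul, mul_one]
      ring
    simp only [hsplit]
    refine add_mem (sum_mem fun i _ => ?_) ?_
    · rw [MvPolynomial.pderiv_monomial, MvPolynomial.pderiv_monomial,
        MvPolynomial.monomial_mem_restrictSupport]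
      -- For `m i = 0` the truncated exponent `m - single i 1` is `m`, but the coefficient vanishes.
      by_cases hi : m i = 0
      · right; simp [hi]
      · left
        have h1 : (m - Finsupp.single i 1).degree + 1 = m.degree := by
          conv_rhs => rw [← tsub_add_cancel_of_le
            (Finsupp.single_le_iff.2 (Nat.one_le_iff_ne_zero.2 hi) : Finsupp.single i 1 ≤ m)]
          rw [map_add, Finsupp.degree_single]
        have h2 : (m - Finsupp.single i 1 - Finsupp.single i 1).degree ≤
            (m - Finsupp.single i 1).degree := Finsupp.degree_mono tsub_le_self
        change _ < n
        omega
    · rw [MvPolynomial.monomial_mem_restrictSupport]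
      rcases Nat.lt_succ_iff_lt_or_eq.1 hm' with h | h
      · exact Or.inl h
      · right; simp [h]

/-- If `Q : ℝ^M → ℝ` is a polynomial function of total degree at most `d`, then
`(L ∘ (L + Id) ∘ ⋯ ∘ (L + d·Id)) Q = 0`. -/
theorem stmt_18 (M d : ℕ) (Q : (Fin M → ℝ) → ℝ)
    (hQ : ∃ q : MvPolynomial (Fin M) ℝ, q.totalDegree ≤ d ∧
      Q = fun x => MvPolynomial.eval x q) :
    opChain M d Q (d + 1) = 0 := by
  obtain ⟨q, hq, rfl⟩ := hQ
  have key : ∀ k ≤ d + 1, ∃ p : MvPolynomial (Fin M) ℝ,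
      p ∈ MvPolynomial.restrictSupport ℝ {m : Fin M →₀ ℕ | m.degree < d + 1 - k} ∧
      opChain M d (fun x => MvPolynomial.eval x q) k = fun x => MvPolynomial.eval x p := by
    intro k
    induction k with
    | zero =>
      refine fun _ => ⟨q, ?_, rfl⟩
      rw [MvPolynomial.mem_restrictSupport_iff]
      intro m hm
      have h : m.degree ≤ q.totalDegree := MvPolynomial.le_totalDegree hm
      change m.degree < d + 1 - 0
      omega
    | succ k ih =>
      intro hk
      obtain ⟨p, hp, h⟩ := ih (by omega)
      refine ⟨polyOU p + ((d - k : ℕ) : ℝ) • p, ?_, ?_⟩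
      · rw [show d + 1 - (k + 1) = d - k by omega]
        refine polyOU_add_mem _ _ ?_
        rwa [show d - k + 1 = d + 1 - k by omega]
      · funext x
        simp [opChain, h, LOU_eval]
  obtain ⟨p, hp, h⟩ := key (d + 1) le_rfl
  have hp0 : p = 0 := by
    rw [MvPolynomial.mem_restrictSupport_iff] at hp
    rw [← MvPolynomial.support_eq_empty, Finset.eq_empty_iff_forall_notMem]
    intro m hm
    have h : m.degree < d + 1 - (d + 1) := hp hm
    omega
  rw [h, hp0]
  funext x
  simp
end
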